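/- arXiv:math/0609644 — 3 statements merged into one kernel-verified Lean document; each statement's English description precedes it below -/
import Mathlib

section
/- Let Y be a Young diagram of size n given by b, let σ be any permutation, and let y ∈ {1,…,n−1} satisfy b(y+1) > b(y) and b(y) − y = i with i ∈ {0, 1} (a 0- or 1-critical point of Y). Define the Young diagram Y'' of size n − y by b''(t) = b(y + t) − y for 1 ≤ t ≤ n − y. If i = 0, define Y' of size y by b'(t) = b(t) for 1 ≤ t ≤ y; if i = 1, define Y' of size y + 1 by b'(t) = min(b(t), y+1) for 1 ≤ t ≤ y + 1. Then |S_Y(σ)| = |S_{Y'}(σ)| · |S_{Y''}(σ)|. -/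
/-! Write `y = j + 1`, `i ∈ {0, 1}`, and index columns and heights from `0`. The rows below height
`y` have length at most `y + i` and those at height `y` or above are longer than `y + i`. So the
`y` dots below height `y` lie in the first `y + i` columns, which leaves exactly `i ≤ 1` dots of
height at least `y` in these columns (`Cut.early_high_card` gives the upper bound).

A transversal `π` therefore splits: `π'` consists of the first `y + i` columns, with the exceptional
high dot (if `i = 1`) lowered to height `y`, and `π''` of the dots at height at least `y`, shifted
by `y` in both directions, with the exceptional column (if `i = 1`) moved to the first place.
Both cases are described by the same formulas, `π' t = min (π t) y` and
`π'' (t - y) = π t - y` with truncated subtraction; this is the relation `Splits`. It is a bijection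
between transversals of `Y` and pairs of transversals of `Y'` and `Y''` (`Cut.exists_pair`,
`Cut.exists_perm`, `Splits.pair_unique`, `Splits.perm_unique`, `Splits.isTransversal_iff`).

An occurrence of a pattern in `Y` either has a dot
below height `y`, and then all its columns are among the first `y + i` and it is an occurrence in
`Y'`, or it has none, and it is an occurrence in `Y''`; the converse directions are direct
(`Splits.containsIn_iff`). -/

open Equiv

/-- `π` is a transversal of the Young diagram with row lengths `b` (zero-indexed:
the row at height `h` has `b h` cells, i.e. column `i` (1-indexed `i+1`) lies in that row
iff `(i:ℕ)+1 ≤ b h`). -/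
def IsTransversal {n : ℕ} (b : Fin n → ℕ) (π : Equiv.Perm (Fin n)) : Prop :=
  ∀ i : Fin n, (i : ℕ) + 1 ≤ b (π i)

/-- The transversal `π` contains the pattern `τ` inside the Young diagram `b`:
there are columns `f 0 < f 1 < …` whose dots are in the relative order prescribed by `τ`
and all rows and columns through these dots intersect inside the diagram. -/
def ContainsIn {n k : ℕ} (b : Fin n → ℕ) (π : Equiv.Perm (Fin n))
    (τ : Equiv.Perm (Fin k)) : Prop :=
  ∃ f : Fin k → Fin n, StrictMono f ∧
    (∀ s t : Fin k, τ s < τ t ↔ π (f s) < π (f t)) ∧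
    (∀ s t : Fin k, (f s : ℕ) + 1 ≤ b (π (f t)))

/-- `|S_Y(τ)|`: the number of transversals of the Young diagram `b` avoiding `τ` in `Y`. -/
noncomputable def SYcard {n k : ℕ} (b : Fin n → ℕ) (τ : Equiv.Perm (Fin k)) : ℕ :=
  Nat.card {π : Equiv.Perm (Fin n) // IsTransversal b π ∧ ¬ ContainsIn b π τ}

/-- Classical pattern containment for permutations. -/
def ContainsPat {n k : ℕ} (π : Equiv.Perm (Fin n)) (τ : Equiv.Perm (Fin k)) : Prop :=
  ∃ f : Fin k → Fin n, StrictMono f ∧ ∀ s t : Fin k, τ s < τ t ↔ π (f s) < π (f t)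

/-- `|S_n(τ)|`: the number of permutations of length `n` avoiding `τ`. -/
noncomputable def SnCard (n : ℕ) {k : ℕ} (τ : Equiv.Perm (Fin k)) : ℕ :=
  Nat.card {π : Equiv.Perm (Fin n) // ¬ ContainsPat π τ}

def p123 : Equiv.Perm (Fin 3) := Equiv.refl _
def p213 : Equiv.Perm (Fin 3) :=
  ⟨![1, 0, 2], ![1, 0, 2], by intro x; fin_cases x <;> rfl, by intro x; fin_cases x <;> rfl⟩
def p312 : Equiv.Perm (Fin 3) :=
  ⟨![2, 0, 1], ![1, 2, 0], by intro x; fin_cases x <;> rfl, by intro x; fin_cases x <;> rfl⟩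
def p321 : Equiv.Perm (Fin 3) :=
  ⟨![2, 1, 0], ![2, 1, 0], by intro x; fin_cases x <;> rfl, by intro x; fin_cases x <;> rfl⟩

/-- `(σ|τ)`: the block sum with the block of `σ` before and entirely above the block of `τ`. -/
def blockSum {m k : ℕ} (σ : Equiv.Perm (Fin m)) (τ : Equiv.Perm (Fin k)) :
    Equiv.Perm (Fin (m + k)) :=
  finSumFinEquiv.symm.trans ((((Equiv.sumCongr σ τ).trans
    (Equiv.sumComm (Fin m) (Fin k))).trans finSumFinEquiv).trans
    (finCongr (Nat.add_comm k m)))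

/-- `|S_{↘Y}(τ)|`: avoiders whose two leftmost entries are decreasing. -/
noncomputable def SYcardLeftDesc {m k : ℕ} (b : Fin m → ℕ) (τ : Equiv.Perm (Fin k)) : ℕ :=
  Nat.card {π : Equiv.Perm (Fin m) // IsTransversal b π ∧ ¬ ContainsIn b π τ ∧
    ∀ i j : Fin m, (i : ℕ) = 0 → (j : ℕ) = 1 → π j < π i}

/-- `|S_{↗Y}(τ)|`: avoiders whose two leftmost entries are increasing. -/
noncomputable def SYcardLeftAsc {m k : ℕ} (b : Fin m → ℕ) (τ : Equiv.Perm (Fin k)) : ℕ :=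
  Nat.card {π : Equiv.Perm (Fin m) // IsTransversal b π ∧ ¬ ContainsIn b π τ ∧
    ∀ i j : Fin m, (i : ℕ) = 0 → (j : ℕ) = 1 → π i < π j}

/-- `|S^{↘}_Y(τ)|`: avoiders in which the value `m` occurs to the left of the value `m-1`. -/
noncomputable def SYcardTopDesc {m k : ℕ} (b : Fin m → ℕ) (τ : Equiv.Perm (Fin k)) : ℕ :=
  Nat.card {π : Equiv.Perm (Fin m) // IsTransversal b π ∧ ¬ ContainsIn b π τ ∧
    ∀ u v : Fin m, (u : ℕ) + 1 = m → (v : ℕ) + 2 = m → π⁻¹ u < π⁻¹ v}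

/-- `|S^{↗}_Y(τ)|`: avoiders in which the value `m-1` occurs to the left of the value `m`. -/
noncomputable def SYcardTopAsc {m k : ℕ} (b : Fin m → ℕ) (τ : Equiv.Perm (Fin k)) : ℕ :=
  Nat.card {π : Equiv.Perm (Fin m) // IsTransversal b π ∧ ¬ ContainsIn b π τ ∧
    ∀ u v : Fin m, (u : ℕ) + 1 = m → (v : ℕ) + 2 = m → π⁻¹ v < π⁻¹ u}

/-! ### The cut diagrams and the splitting relation -/

/-- The hypotheses on the three diagrams. `b` is the big diagram of size `n`, cut at height `y` with
critical index `i ≤ 1`; `b'` of size `m = y + i` is the lower part and `b''` of size `l = n - y` the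
upper part. -/
structure Cut {n m l : ℕ} (y i : ℕ) (b : Fin n → ℕ) (b' : Fin m → ℕ) (b'' : Fin l → ℕ) :
    Prop where
  index_le : i ≤ 1
  size_lower : m = y + i
  size_upper : y + l = n
  size_lt : m < n
  low : ∀ v : Fin n, (v : ℕ) < y → b v ≤ m
  high : ∀ v : Fin n, y ≤ (v : ℕ) → m < b v
  lower : ∀ (t : Fin m) (v : Fin n), (t : ℕ) = v → b' t = min (b v) m
  upper : ∀ (s : Fin l) (v : Fin n), (v : ℕ) = y + s → b'' s = b v - y

/-- `π` splits at height `y` into the lower part `p` and the upper part `q`. The subtraction `t - y`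
is truncated, so that a dot of height at least `y` in a column `t ≤ y` goes to column `0` of `q`. -/
structure Splits {n m l : ℕ} (y : ℕ) (π : Perm (Fin n)) (p : Perm (Fin m)) (q : Perm (Fin l)) :
    Prop where
  lower : ∀ (t : Fin n) (s : Fin m), (s : ℕ) = t → (p s : ℕ) = min (π t : ℕ) y
  upper : ∀ (t : Fin n) (s : Fin l), (s : ℕ) = t - y → y ≤ (π t : ℕ) → (q s : ℕ) = π t - y

/-! ### Existence of the splitting and of its inverse -/

namespace Cut

variable {n m l y i : ℕ} {b : Fin n → ℕ} {b' : Fin m → ℕ} {b'' : Fin l → ℕ}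

theorem column_lt (h : Cut y i b b' b'') {π : Perm (Fin n)} (hT : IsTransversal b π) (t : Fin n)
    (ht : (π t : ℕ) < y) : (t : ℕ) < m := by
  have h1 := hT t
  have h2 := h.low _ ht
  omega

/-- At most `i` dots of height at least `y` lie in the first `m = y + i` columns, since the `y` dots
below height `y` all lie there. -/
theorem early_high_card (h : Cut y i b b' b'') {π : Perm (Fin n)} (hT : IsTransversal b π)
    (A : Finset (Fin n)) (hA : ∀ t ∈ A, (t : ℕ) < m ∧ y ≤ (π t : ℕ)) : A.card ≤ i := by
  classical
  have hs := h.size_lower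
  have hl := h.size_lt
  let B : Finset (Fin n) := Finset.univ.image (fun v : Fin y => π.symm ⟨v, by omega⟩)
  have hB : B.card = y := by
    rw [Finset.card_image_of_injective, Finset.card_univ, Fintype.card_fin]
    intro u v huv
    have := π.symm.injective huv
    simpa [Fin.ext_iff] using this
  have hBv : ∀ t ∈ B, (π t : ℕ) < y := by
    intro t ht
    obtain ⟨v, -, rfl⟩ := Finset.mem_image.mp ht
    simp
  have hd : Disjoint A B := by
    rw [Finset.disjoint_left]
    intro t ht ht'
    have := (hA t ht).2
    have := hBv t ht'
    omega
  have hsub : (A ∪ B).image (fun t : Fin n => (t : ℕ)) ⊆ Finset.range m := by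
    intro x hx
    obtain ⟨t, ht, rfl⟩ := Finset.mem_image.mp hx
    rw [Finset.mem_range]
    rcases Finset.mem_union.mp ht with ht | ht
    · exact (hA t ht).1
    · exact h.column_lt hT t (hBv t ht)
  have hc := Finset.card_le_card hsub
  rw [Finset.card_image_of_injective _ Fin.val_injective, Finset.card_union_of_disjoint hd, hB,
    Finset.card_range] at hc
  omega

theorem early_high_unique (h : Cut y i b b' b'') {π : Perm (Fin n)} (hT : IsTransversal b π)
    (t u : Fin n) (ht : (t : ℕ) < m) (hu : (u : ℕ) < m) (ht' : y ≤ (π t : ℕ))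
    (hu' : y ≤ (π u : ℕ)) : t = u := by
  by_contra hne
  have h1 := h.early_high_card hT {t, u} (by
    intro x hx
    rcases Finset.mem_insert.mp hx with rfl | hx
    · exact ⟨ht, ht'⟩
    · rw [Finset.mem_singleton.mp hx]
      exact ⟨hu, hu'⟩)
  rw [Finset.card_pair hne] at h1
  have := h.index_le
  omega

theorem early_high_index (h : Cut y i b b' b'') {π : Perm (Fin n)} (hT : IsTransversal b π)
    (t : Fin n) (ht : (t : ℕ) < m) (ht' : y ≤ (π t : ℕ)) : i = 1 := by
  have h1 := h.early_high_card hT {t} (by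
    intro x hx
    rw [Finset.mem_singleton.mp hx]
    exact ⟨ht, ht'⟩)
  rw [Finset.card_singleton] at h1
  have := h.index_le
  omega

theorem exists_pair (h : Cut y i b b' b'') {π : Perm (Fin n)} (hT : IsTransversal b π) :
    ∃ (p : Perm (Fin m)) (q : Perm (Fin l)), Splits y π p q := by
  have hs := h.size_lower
  have hl := h.size_lt
  have hi := h.index_le
  have hu := h.size_upper
  have p_lt : ∀ t : Fin m, min (π ⟨t, by omega⟩ : ℕ) y < m := by
    intro t
    have := h.early_high_index hT ⟨t, by omega⟩ t.isLt
    omega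
  let p₀ : Fin m → Fin m := fun t => ⟨min (π ⟨t, by omega⟩ : ℕ) y, p_lt t⟩
  have p_inj : Function.Injective p₀ := by
    intro s t hst
    have hst' : min (π ⟨s, by omega⟩ : ℕ) y = min (π ⟨t, by omega⟩ : ℕ) y := congrArg Fin.val hst
    by_cases hs' : y ≤ (π ⟨s, by omega⟩ : ℕ)
    · have := h.early_high_unique hT ⟨s, by omega⟩ ⟨t, by omega⟩ s.isLt t.isLt hs' (by omega)
      simpa [Fin.ext_iff] using this
    · have := π.injective (Fin.ext (show (π ⟨s, by omega⟩ : ℕ) = (π ⟨t, by omega⟩ : ℕ) by omega))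
      simpa [Fin.ext_iff] using this
  let r₀ : Fin l → Fin l := fun v => ⟨(π.symm ⟨y + v, by omega⟩ : ℕ) - y, by omega⟩
  have r_inj : Function.Injective r₀ := by
    intro s t hst
    have hst' : (π.symm ⟨y + s, by omega⟩ : ℕ) - y = (π.symm ⟨y + t, by omega⟩ : ℕ) - y :=
      congrArg Fin.val hst
    have key : π.symm ⟨y + s, by omega⟩ = π.symm ⟨y + t, by omega⟩ := by
      have i1 := h.early_high_index hT (π.symm ⟨y + s, by omega⟩)
      have i2 := h.early_high_index hT (π.symm ⟨y + t, by omega⟩)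
      have i3 := h.early_high_unique hT (π.symm ⟨y + s, by omega⟩) (π.symm ⟨y + t, by omega⟩)
      simp only [apply_symm_apply, le_add_iff_nonneg_right, zero_le, forall_const] at i1 i2 i3
      by_cases c1 : (π.symm ⟨y + s, by omega⟩ : ℕ) < m
      · exact i3 c1 (by have := i1 c1; omega)
      · by_cases c2 : (π.symm ⟨y + t, by omega⟩ : ℕ) < m
        · exact i3 (by have := i2 c2; omega) c2
        · exact Fin.ext (by omega)
    have := π.symm.injective key
    simpa [Fin.ext_iff] using this
  refine ⟨Equiv.ofBijective p₀ (Finite.injective_iff_bijective.mp p_inj),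
    (Equiv.ofBijective r₀ (Finite.injective_iff_bijective.mp r_inj)).symm, ⟨?_, ?_⟩⟩
  · intro t s hst
    have ht : t = ⟨s, by omega⟩ := Fin.ext hst.symm
    rw [ht]
    rfl
  · intro t s hst hy
    have : (Equiv.ofBijective r₀ (Finite.injective_iff_bijective.mp r_inj)).symm s
        = ⟨(π t : ℕ) - y, by omega⟩ := by
      rw [Equiv.symm_apply_eq]
      apply Fin.ext
      have e : (⟨y + ((π t : ℕ) - y), by omega⟩ : Fin n) = π t := Fin.ext (by simp; omega)
      simp [r₀, e, hst]
    rw [this]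

theorem exists_perm (h : Cut y i b b' b'') (p : Perm (Fin m)) (q : Perm (Fin l)) :
    ∃ π : Perm (Fin n), Splits y π p q := by
  have hs := h.size_lower
  have hl := h.size_lt
  have hi := h.index_le
  have hu := h.size_upper
  classical
  let f : Fin n → Fin n := fun t =>
    if c : ∃ ht : (t : ℕ) < m, (p ⟨t, ht⟩ : ℕ) < y then ⟨p ⟨t, c.1⟩, by omega⟩
    else ⟨y + q ⟨t - y, by omega⟩, by omega⟩
  have f_low : ∀ (t : Fin n) (ht : (t : ℕ) < m), (p ⟨t, ht⟩ : ℕ) < y → (f t : ℕ) = p ⟨t, ht⟩ := by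
    intro t ht hp
    simp only [f]
    rw [dif_pos ⟨ht, hp⟩]
  have f_high : ∀ t : Fin n, (∀ ht : (t : ℕ) < m, y ≤ (p ⟨t, ht⟩ : ℕ)) →
      (f t : ℕ) = y + q ⟨t - y, by omega⟩ := by
    intro t ht
    simp only [f]
    rw [dif_neg (by rintro ⟨h1, h2⟩; have := ht h1; omega)]
  have dich : ∀ t : Fin n, (∃ ht : (t : ℕ) < m, (p ⟨t, ht⟩ : ℕ) < y) ∨
      (∀ ht : (t : ℕ) < m, y ≤ (p ⟨t, ht⟩ : ℕ)) := by
    intro t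
    by_cases c : ∃ ht : (t : ℕ) < m, (p ⟨t, ht⟩ : ℕ) < y
    · exact Or.inl c
    · right
      intro ht
      by_contra hc
      exact c ⟨ht, by omega⟩
  have f_inj : Function.Injective f := by
    intro t u htu
    have htu' : (f t : ℕ) = f u := congrArg Fin.val htu
    rcases dich t with ⟨ht, hpt⟩ | ht <;> rcases dich u with ⟨hu', hpu⟩ | hu'
    · rw [f_low t ht hpt, f_low u hu' hpu] at htu'
      have := p.injective (Fin.ext htu')
      simpa [Fin.ext_iff] using this
    · rw [f_low t ht hpt, f_high u hu'] at htu'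
      omega
    · rw [f_high t ht, f_low u hu' hpu] at htu'
      omega
    · rw [f_high t ht, f_high u hu'] at htu'
      have := q.injective (Fin.ext (show (q ⟨t - y, by omega⟩ : ℕ) = q ⟨u - y, by omega⟩ by omega))
      have e : (t : ℕ) - y = u - y := by simpa [Fin.ext_iff] using this
      apply Fin.ext
      by_cases c1 : (t : ℕ) < m
      · have a1 := ht c1
        have a2 := (p ⟨t, c1⟩).isLt
        have c2 : (u : ℕ) < m := by omega
        have a3 := hu' c2
        have a4 := (p ⟨u, c2⟩).isLt
        have := p.injective (Fin.ext (show (p ⟨t, c1⟩ : ℕ) = p ⟨u, c2⟩ by omega))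
        simpa [Fin.ext_iff] using this
      · by_cases c2 : (u : ℕ) < m
        · have a3 := hu' c2
          have a4 := (p ⟨u, c2⟩).isLt
          omega
        · omega
  refine ⟨Equiv.ofBijective f (Finite.injective_iff_bijective.mp f_inj), ⟨?_, ?_⟩⟩
  · intro t s hst
    rw [Equiv.ofBijective_apply]
    have hs' : s = ⟨t, by omega⟩ := Fin.ext hst
    rw [hs']
    rcases dich t with ⟨ht, hpt⟩ | ht
    · rw [f_low t ht hpt]
      omega
    · rw [f_high t ht]
      have a1 := ht (by omega)
      have a2 := (p ⟨t, by omega⟩).isLt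
      omega
  · intro t s hst hy
    rw [Equiv.ofBijective_apply] at hy ⊢
    have hs' : s = ⟨t - y, by omega⟩ := Fin.ext hst
    rw [hs']
    rcases dich t with ⟨ht, hpt⟩ | ht
    · rw [f_low t ht hpt] at hy
      omega
    · rw [f_high t ht]
      omega

end Cut

/-! ### Uniqueness, transversality and pattern containment under splitting -/

namespace Splits

variable {n m l y i : ℕ} {b : Fin n → ℕ} {b' : Fin m → ℕ} {b'' : Fin l → ℕ}
  {π : Perm (Fin n)} {p : Perm (Fin m)} {q : Perm (Fin l)}

/-- Every dot of the upper part comes from a dot of `π`. -/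
theorem exists_column (h : Cut y i b b' b'') (R : Splits y π p q) (s : Fin l) :
    ∃ t : Fin n, (s : ℕ) = t - y ∧ (π t : ℕ) = y + q s := by
  have hu := h.size_upper
  have hl := h.size_lt
  have hs := h.size_lower
  refine ⟨π.symm ⟨y + q s, by omega⟩, ?_, by simp⟩
  have h1 := R.upper (π.symm ⟨y + q s, by omega⟩)
    ⟨(π.symm ⟨y + q s, by omega⟩ : ℕ) - y, by omega⟩ rfl (by simp)
  simp only [apply_symm_apply, Nat.add_sub_cancel_left] at h1
  have := q.injective (Fin.ext h1)
  exact (congrArg Fin.val this).symm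

theorem pair_unique (h : Cut y i b b' b'') (R : Splits y π p q) {p₂ : Perm (Fin m)}
    {q₂ : Perm (Fin l)} (R₂ : Splits y π p₂ q₂) : p = p₂ ∧ q = q₂ := by
  have hl := h.size_lt
  constructor
  · ext s
    rw [R.lower ⟨s, by omega⟩ s rfl, R₂.lower ⟨s, by omega⟩ s rfl]
  · ext s
    obtain ⟨t, h1, h2⟩ := R.exists_column h s
    have := R₂.upper t s h1 (by omega)
    omega

theorem perm_unique (h : Cut y i b b' b'') (hT : IsTransversal b π) (R : Splits y π p q)
    {π₂ : Perm (Fin n)} (hT₂ : IsTransversal b π₂) (R₂ : Splits y π₂ p q) : π = π₂ := by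
  have hl := h.size_lt
  have hu := h.size_upper
  have hs := h.size_lower
  ext t
  have h1 := h.column_lt hT t
  have h2 := h.column_lt hT₂ t
  have h3 := R.upper t ⟨t - y, by omega⟩ rfl
  have h4 := R₂.upper t ⟨t - y, by omega⟩ rfl
  by_cases c : (t : ℕ) < m
  · have h5 := R.lower t ⟨t, c⟩ rfl
    have h6 := R₂.lower t ⟨t, c⟩ rfl
    omega
  · omega

/-- The first `m` columns of `π` hold at most one dot of height at least `y`, because it becomes the
dot of height exactly `y` of the lower part `p`; it can exist only if `p` has a row at height `y`. -/
theorem early_high (R : Splits y π p q) (t u : Fin n) (ht : (t : ℕ) < m) (hu : (u : ℕ) < m)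
    (ht' : y ≤ (π t : ℕ)) (hu' : y ≤ (π u : ℕ)) : t = u ∧ y < m := by
  have h1 := R.lower t ⟨t, ht⟩ rfl
  have h2 := R.lower u ⟨u, hu⟩ rfl
  have h3 := (p ⟨t, ht⟩).isLt
  have := p.injective (Fin.ext (show (p ⟨t, ht⟩ : ℕ) = p ⟨u, hu⟩ by omega))
  exact ⟨Fin.ext (by simpa [Fin.ext_iff] using this), by omega⟩

/-- Lowering the exceptional dot does not change the length of its row inside `Y'`. -/
theorem row_lower (h : Cut y i b b' b'') (R : Splits y π p q) (t : Fin n) (s : Fin m)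
    (hst : (s : ℕ) = t) : b' (p s) = min (b (π t)) m := by
  have hl := h.size_lt
  have h1 := R.lower t s hst
  by_cases c : (π t : ℕ) < y
  · exact h.lower _ _ (by omega)
  · have h2 := h.lower (p s) ⟨y, by omega⟩ (by simp; omega)
    have h3 := h.high ⟨y, by omega⟩ le_rfl
    have h4 := h.high (π t) (by omega)
    omega

theorem row_upper (h : Cut y i b b' b'') (R : Splits y π p q) (t : Fin n) (s : Fin l)
    (hst : (s : ℕ) = t - y) (hy : y ≤ (π t : ℕ)) : b'' (q s) = b (π t) - y := by
  have h1 := R.upper t s hst hy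
  exact h.upper _ _ (by omega)

theorem isTransversal_iff (h : Cut y i b b' b'') (R : Splits y π p q) :
    IsTransversal b π ↔ IsTransversal b' p ∧ IsTransversal b'' q := by
  have hl := h.size_lt
  have hu := h.size_upper
  have hs := h.size_lower
  constructor
  · intro hT
    constructor
    · intro s
      rw [R.row_lower h ⟨s, by omega⟩ s rfl]
      have := hT ⟨s, by omega⟩
      simp only at this
      omega
    · intro s
      obtain ⟨t, h1, h2⟩ := R.exists_column h s
      rw [R.row_upper h t s h1 (by omega)]
      have := hT t
      have := h.high (π t) (by omega)
      omega
  · rintro ⟨hp, hq⟩ t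
    by_cases c : (t : ℕ) < m
    · have h1 := hp ⟨t, c⟩
      rw [R.row_lower h t ⟨t, c⟩ rfl] at h1
      simp only at h1
      omega
    · have hy : y ≤ (π t : ℕ) := by
        -- The `y` low values are taken by `p` in the first `m` columns, so not in column `t`.
        by_contra hy
        let s := p.symm ⟨π t, by omega⟩
        have h1 := R.lower ⟨s, by omega⟩ s rfl
        have h2 : (p s : ℕ) = π t := by simp [s]
        have := π.injective (Fin.ext (show (π ⟨s, by omega⟩ : ℕ) = π t by omega))
        have h3 : (s : ℕ) = t := congrArg Fin.val this
        omega
      have h1 := hq ⟨t - y, by omega⟩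
      rw [R.row_upper h t ⟨t - y, by omega⟩ rfl hy] at h1
      simp only at h1
      omega

theorem lt_iff_lower (R : Splits y π p q) (s t : Fin m) (u v : Fin n) (hs : (s : ℕ) = u)
    (ht : (t : ℕ) = v) : p s < p t ↔ π u < π v := by
  have h1 := R.lower u s hs
  have h2 := R.lower v t ht
  have h3 := R.early_high u v (by omega) (by omega)
  rw [Fin.lt_def, Fin.lt_def]
  by_cases c : y ≤ (π u : ℕ) ∧ y ≤ (π v : ℕ)
  · obtain ⟨rfl, -⟩ := h3 c.1 c.2
    omega
  · omega

theorem containsIn_iff (h : Cut y i b b' b'') (R : Splits y π p q) {k : ℕ}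
    (σ : Perm (Fin k)) : ContainsIn b π σ ↔ ContainsIn b' p σ ∨ ContainsIn b'' q σ := by
  have hl := h.size_lt
  have hu := h.size_upper
  have hs := h.size_lower
  have hi := h.index_le
  constructor
  · rintro ⟨f, hf, ho, hd⟩
    by_cases c : ∀ t, y ≤ (π (f t) : ℕ)
    · right
      have hval : ∀ s, (q ⟨f s - y, by omega⟩ : ℕ) = π (f s) - y := fun s =>
        R.upper (f s) _ rfl (c s)
      refine ⟨fun s => ⟨f s - y, by omega⟩, ?_, ?_, ?_⟩
      · intro s t hst
        have h1 := hf hst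
        have h2 := R.early_high (f s) (f t)
        have h3 := R.early_high (f s) (f s)
        have h4 := c s
        have h5 := c t
        rw [Fin.lt_def] at h1 ⊢
        simp only
        by_cases c1 : (f t : ℕ) < m
        · have := congrArg Fin.val (h2 (by omega) c1 h4 h5).1
          omega
        · by_cases c2 : (f s : ℕ) < m
          · have := (h3 c2 c2 h4 h4).2
            omega
          · omega
      · intro s t
        rw [ho, Fin.lt_def, Fin.lt_def, hval, hval]
        have h4 := c s
        have h5 := c t
        omega
      · intro s t
        rw [R.row_upper h (f t) _ rfl (c t)]
        have h1 := hd s t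
        have h2 := h.high _ (c t)
        simp only
        omega
    · left
      push Not at c
      obtain ⟨t₀, h0⟩ := c
      have hcol : ∀ s, (f s : ℕ) < m := by
        intro s
        have h1 := hd s t₀
        have h2 := h.low _ h0
        omega
      refine ⟨fun s => ⟨f s, hcol s⟩, fun s t hst => hf hst, ?_, ?_⟩
      · intro s t
        rw [ho, R.lt_iff_lower _ _ (f s) (f t) rfl rfl]
      · intro s t
        rw [R.row_lower h (f t) _ rfl]
        have h1 := hd s t
        have h2 := hcol s
        simp only
        omega
  · rintro (⟨f, hf, ho, hd⟩ | ⟨f, hf, ho, hd⟩)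
    · refine ⟨fun s => ⟨f s, by omega⟩, fun s t hst => hf hst, ?_, ?_⟩
      · intro s t
        rw [ho, R.lt_iff_lower (f s) (f t) ⟨f s, by omega⟩ ⟨f t, by omega⟩ rfl rfl]
      · intro s t
        have h1 := hd s t
        rw [R.row_lower h ⟨f t, by omega⟩ _ rfl] at h1
        simp only
        omega
    · choose g hg1 hg2 using R.exists_column h
      refine ⟨fun s => g (f s), ?_, ?_, ?_⟩
      · intro s t hst
        have h1 := hf hst
        have h2 := hg1 (f s)
        have h3 := hg1 (f t)
        rw [Fin.lt_def] at h1 ⊢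
        simp only
        omega
      · intro s t
        have h2 := hg2 (f s)
        have h3 := hg2 (f t)
        rw [ho, Fin.lt_def, Fin.lt_def]
        simp only
        omega
      · intro s t
        have h1 := hd s t
        have h2 := hg1 (f s)
        rw [R.row_upper h (g (f t)) _ (hg1 _) (by rw [hg2]; omega)] at h1
        simp only
        omega

end Splits

/-! ### Counting -/

theorem Cut.card_eq {n m l y i : ℕ} {b : Fin n → ℕ} {b' : Fin m → ℕ} {b'' : Fin l → ℕ}
    (h : Cut y i b b' b'') {k : ℕ} (σ : Perm (Fin k)) :
    SYcard b σ = SYcard b' σ * SYcard b'' σ := by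
  unfold SYcard
  rw [← Nat.card_prod]
  have hex : ∀ π : {π : Perm (Fin n) // IsTransversal b π ∧ ¬ ContainsIn b π σ},
      ∃ x : {π : Perm (Fin m) // IsTransversal b' π ∧ ¬ ContainsIn b' π σ} ×
        {π : Perm (Fin l) // IsTransversal b'' π ∧ ¬ ContainsIn b'' π σ},
        Splits y π.1 x.1.1 x.2.1 := by
    rintro ⟨π, hT, hC⟩
    obtain ⟨p, q, R⟩ := h.exists_pair hT
    have h1 := (R.isTransversal_iff h).mp hT
    rw [R.containsIn_iff h, not_or] at hC
    exact ⟨(⟨p, h1.1, hC.1⟩, ⟨q, h1.2, hC.2⟩), R⟩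
  choose F hF using hex
  refine Nat.card_congr (Equiv.ofBijective F ⟨?_, ?_⟩)
  · intro π π₂ e
    have R₂ := hF π₂
    rw [← e] at R₂
    exact Subtype.ext ((hF π).perm_unique h π.2.1 π₂.2.1 R₂)
  · rintro ⟨⟨p, hp, hp'⟩, ⟨q, hq, hq'⟩⟩
    obtain ⟨π, R⟩ := h.exists_perm p q
    have hT := (R.isTransversal_iff h).mpr ⟨hp, hq⟩
    refine ⟨⟨π, hT, by rw [R.containsIn_iff h, not_or]; exact ⟨hp', hq'⟩⟩, ?_⟩
    obtain ⟨e1, e2⟩ := (hF ⟨π, hT, by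
      rw [R.containsIn_iff h, not_or]; exact ⟨hp', hq'⟩⟩).pair_unique h R
    exact Prod.ext (Subtype.ext e1) (Subtype.ext e2)

theorem stmt6 (n : ℕ) (b : Fin n → ℕ) (hmono : Monotone b)
    (hb : ∀ y : Fin n, (y : ℕ) + 1 ≤ b y ∧ b y ≤ n)
    (k : ℕ) (σ : Equiv.Perm (Fin k))
    (j : ℕ) (hj : j + 1 < n)
    (hcrit : b ⟨j, Nat.lt_of_succ_lt hj⟩ < b ⟨j + 1, hj⟩)
    (i : ℕ) (hi : i = 0 ∨ i = 1)
    (hidx : b ⟨j, Nat.lt_of_succ_lt hj⟩ = (j + 1) + i) :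
    SYcard b σ =
      (if i = 0 then
        SYcard (fun t : Fin (j + 1) => b ⟨(t : ℕ), by have := t.isLt; omega⟩) σ
      else
        SYcard (fun t : Fin (j + 2) => min (b ⟨(t : ℕ), by have := t.isLt; omega⟩) (j + 2)) σ) *
      SYcard (fun s : Fin (n - (j + 1)) =>
        b ⟨(j + 1) + (s : ℕ), by have := s.isLt; omega⟩ - (j + 1)) σ := by
  have hlow : ∀ v : Fin n, (v : ℕ) < j + 1 → b v ≤ j + 1 + i := fun v hv => by
    rw [← hidx]
    exact hmono (Fin.le_def.mpr (by simp only; omega))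
  have hhigh : ∀ v : Fin n, j + 1 ≤ (v : ℕ) → j + 1 + i < b v := fun v hv => by
    rw [← hidx]
    exact lt_of_lt_of_le hcrit (hmono (Fin.le_def.mpr hv))
  have hsize : j + 1 + i < n := by
    rw [← hidx]
    exact lt_of_lt_of_le hcrit (hb _).2
  have hupper : ∀ (s : Fin (n - (j + 1))) (v : Fin n), (v : ℕ) = j + 1 + s →
      b ⟨(j + 1) + (s : ℕ), by omega⟩ - (j + 1) = b v - (j + 1) := fun s v hv => by
    congr 2
    exact Fin.ext hv.symm
  rcases hi with rfl | rfl
  · rw [if_pos rfl]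
    refine Cut.card_eq (y := j + 1) (i := 0)
      ⟨by omega, rfl, by omega, hsize, hlow, hhigh, ?_, hupper⟩ σ
    intro t v htv
    have hv : v = ⟨t, by omega⟩ := Fin.ext htv.symm
    rw [hv]
    exact (min_eq_left (hlow _ t.isLt)).symm
  · rw [if_neg one_ne_zero]
    refine Cut.card_eq (y := j + 1) (i := 1)
      ⟨by omega, rfl, by omega, hsize, hlow, hhigh, ?_, hupper⟩ σ
    intro t v htv
    have hv : v = ⟨t, by omega⟩ := Fin.ext htv.symm
    rw [hv]
end

section
/- Let Y be a Young diagram of size n given by b, let σ be any permutation, and let y ∈ {1,…,n−1} satisfy b(y+1) > b(y) and b(y) = y + 2 (a 2-critical point of Y). Define the Young diagram Y' of size y + 2 by b'(t) = min(b(t), y+2) and the Young diagram Y'' of size n − y by b''(t) = b(y + t) − y. Then |S_Y(σ)| = |S^{↗}_{Y'}(σ)| · |S_{↗Y''}(σ)| + |S^{↘}_{Y'}(σ)| · |S_{↘Y''}(σ)|. -/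
/-!
The lowest `j + 1` rows of `Y` have at most `j + 3` cells, so their dots lie in the first `j + 3`
columns; counting, exactly two of these columns, `c < d`, carry a dot of height at least `j + 1`.
Lowering these two dots to the top two rows of `Y'` (keeping their relative order) turns the first
`j + 3` columns of `π` into a transversal `p` of `Y'`, and the dots of height at least `j + 1`
form a transversal `q` of `Y''` whose first two columns are `c` and `d`. By construction in `p` the second
largest value precedes the largest exactly when `q` starts with an ascent, and `π` is recovered from `(p, q)`.
This correspondence is the relation `Glued`; `exists_glued_of_perm`, `exists_glued_of_pair`,
`Glued.unique_left` and `Glued.unique_right` say it is a bijection.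

Both halves are obtained by order preserving maps on columns and heights. An occurrence of `σ`
inside `Y` that uses a low dot is confined to the first `j + 3` columns, hence lives in `Y'`; an
occurrence without low dots lives in `Y''`. As the rows of `Y` from height `j + 1` up are longer
than `j + 3`, the converse holds too, so `π` avoids `σ` iff both `p` and `q` do
(`Glued.contains_iff`).

Columns and heights are counted from `0`.
-/


open Equiv

/-! ### The gluing relation -/

/-- Column of `Y` carrying column `s` of `Y''`: the first two columns of `Y''` come from
columns `c` and `d` of `Y`, the others are shifted by the height `j + 1` of the critical point. -/
def upCol (j c d s : ℕ) : ℕ := if s = 0 then c else if s = 1 then d else s + (j + 1)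

/-- The gluing relation between a transversal `π` of `Y`, a transversal `p` of `Y'` and a
transversal `q` of `Y''`. Among the first `j + 3` columns, exactly `c < d` carry a dot of `π`
at height at least `j + 1`; `p` records the first `j + 3` columns with those two dots lowered to
the top two rows of `Y'` in the same relative order, `q` records the dots of height at least
`j + 1`. -/
def Glued {n j : ℕ} (π : Equiv.Perm (Fin n)) (p : Equiv.Perm (Fin (j + 3)))
    (q : Equiv.Perm (Fin (n - (j + 1)))) (c d : ℕ) : Prop :=
  c < d ∧ d < j + 3 ∧
  (∀ (i : Fin n) (i' : Fin (j + 3)), (i : ℕ) = i' → (i : ℕ) ≠ c → (i : ℕ) ≠ d →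
    (π i : ℕ) = p i' ∧ (p i' : ℕ) < j + 1) ∧
  (∀ (i : Fin n) (s : Fin (n - (j + 1))), (i : ℕ) = upCol j c d s →
    (π i : ℕ) = q s + (j + 1)) ∧
  ((∀ (x y : Fin (j + 3)) (s t : Fin (n - (j + 1))), (x : ℕ) = c → (y : ℕ) = d →
      (s : ℕ) = 0 → (t : ℕ) = 1 → (p x : ℕ) = j + 1 ∧ (p y : ℕ) = j + 2 ∧ q s < q t) ∨
   (∀ (x y : Fin (j + 3)) (s t : Fin (n - (j + 1))), (x : ℕ) = c → (y : ℕ) = d →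
      (s : ℕ) = 0 → (t : ℕ) = 1 → (p x : ℕ) = j + 2 ∧ (p y : ℕ) = j + 1 ∧ q t < q s))

section
variable {n j : ℕ} {π π₂ : Equiv.Perm (Fin n)} {p p₂ : Equiv.Perm (Fin (j + 3))}
  {q q₂ : Equiv.Perm (Fin (n - (j + 1)))} {c d c₂ d₂ : ℕ}

lemma upCol_lt_iff (hcd : c < d) (hd : d < j + 3) (s t : ℕ) :
    upCol j c d s < upCol j c d t ↔ s < t := by
  unfold upCol; split_ifs <;> omega

lemma upCol_lt (hcd : c < d) (hd : d < j + 3) (hn : j + 4 ≤ n) (s : Fin (n - (j + 1))) :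
    upCol j c d s < n := by
  have := s.isLt
  unfold upCol; split_ifs <;> omega

/-- Every dot of `π` is either low, in one of the first `j + 3` columns and shared with `p`,
or comes from `q`. -/
lemma Glued.cases (h : Glued π p q c d) (hn : j + 4 ≤ n) (i : Fin n) :
    ((i : ℕ) < j + 3 ∧ (i : ℕ) ≠ c ∧ (i : ℕ) ≠ d ∧ (π i : ℕ) < j + 1) ∨
    (∃ s : Fin (n - (j + 1)), (i : ℕ) = upCol j c d s ∧ (π i : ℕ) = q s + (j + 1)) := by
  obtain ⟨h1, h2, h3, h4, -⟩ := h
  have hi := i.isLt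
  by_cases hc : (i : ℕ) = c
  · exact Or.inr ⟨⟨0, by omega⟩, by simp [upCol, hc], h4 _ _ (by simp [upCol, hc])⟩
  by_cases hd : (i : ℕ) = d
  · exact Or.inr ⟨⟨1, by omega⟩, by simp [upCol, hd], h4 _ _ (by simp [upCol, hd])⟩
  by_cases hj : (i : ℕ) < j + 3
  · have := h3 i ⟨i, hj⟩ rfl hc hd
    exact Or.inl ⟨hj, hc, hd, by omega⟩
  · have : (i : ℕ) = upCol j c d ((i : ℕ) - (j + 1)) := by
      unfold upCol; split_ifs <;> omega
    exact Or.inr ⟨⟨i - (j + 1), by omega⟩, this, h4 _ _ this⟩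

lemma Glued.high_iff (h : Glued π p q c d) (hn : j + 4 ≤ n) (i : Fin n) (hi : (i : ℕ) < j + 3) :
    j + 1 ≤ (π i : ℕ) ↔ ((i : ℕ) = c ∨ (i : ℕ) = d) := by
  rcases h.cases hn i with h' | ⟨s, h1, h2⟩
  · omega
  · have h3 : (i : ℕ) = c ∨ (i : ℕ) = d := by
      unfold upCol at h1; split_ifs at h1 <;> omega
    exact ⟨fun _ => h3, fun _ => by omega⟩

lemma Glued.high_iff' (h : Glued π p q c d) (hn : j + 4 ≤ n) (i : Fin (j + 3)) :
    j + 1 ≤ (p i : ℕ) ↔ ((i : ℕ) = c ∨ (i : ℕ) = d) := by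
  obtain ⟨h1, h2, h3, h4, h5⟩ := h
  have hi := i.isLt
  by_cases hcd : (i : ℕ) = c ∨ (i : ℕ) = d
  · refine ⟨fun _ => hcd, fun _ => ?_⟩
    have key : ∀ x : Fin (j + 3), (x : ℕ) = c ∨ (x : ℕ) = d → j + 1 ≤ (p x : ℕ) := by
      intro x hx
      have hc : c < j + 3 := by omega
      rcases h5 with h5 | h5 <;>
      · have := h5 ⟨c, hc⟩ ⟨d, h2⟩ ⟨0, by omega⟩ ⟨1, by omega⟩ rfl rfl rfl rfl
        rcases hx with hx | hx
        · obtain rfl : x = ⟨c, hc⟩ := Fin.ext hx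
          omega
        · obtain rfl : x = ⟨d, h2⟩ := Fin.ext hx
          omega
    exact key i hcd
  · have := h3 ⟨i, by omega⟩ i rfl (by simp; tauto) (by simp; tauto)
    omega

lemma Glued.lt_iff_left (h : Glued π p q c d) (hn : j + 4 ≤ n) (x y : Fin n)
    (x' y' : Fin (j + 3)) (hx : (x : ℕ) = x') (hy : (y : ℕ) = y') :
    p x' < p y' ↔ π x < π y := by
  have hx1 := h.high_iff hn x (by omega)
  have hx2 := h.high_iff' hn x'
  have hy1 := h.high_iff hn y (by omega)
  have hy2 := h.high_iff' hn y'
  obtain ⟨h1, h2, h3, h4, h5⟩ := h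
  have hx3 := h3 x x' hx
  have hy3 := h3 y y' hy
  rw [Fin.lt_def, Fin.lt_def]
  by_cases hxc : (x : ℕ) = c ∨ (x : ℕ) = d
  · by_cases hyc : (y : ℕ) = c ∨ (y : ℕ) = d
    · by_cases hxy : (x : ℕ) = y
      · obtain rfl : x = y := Fin.ext hxy
        obtain rfl : x' = y' := Fin.ext (by omega)
        simp
      · have hc : c < j + 3 := by omega
        have hcn : c < n := by omega
        have hdn : d < n := by omega
        have hc4 := h4 ⟨c, hcn⟩ ⟨0, by omega⟩ (by simp [upCol])
        have hd4 := h4 ⟨d, hdn⟩ ⟨1, by omega⟩ (by simp [upCol])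
        have e : (x = ⟨c, hcn⟩ ∧ x' = ⟨c, hc⟩ ∧ y = ⟨d, hdn⟩ ∧ y' = ⟨d, h2⟩) ∨
            (y = ⟨c, hcn⟩ ∧ y' = ⟨c, hc⟩ ∧ x = ⟨d, hdn⟩ ∧ x' = ⟨d, h2⟩) := by
          simp only [Fin.ext_iff]; omega
        rcases h5 with h5 | h5 <;>
        · have := h5 ⟨c, by omega⟩ ⟨d, h2⟩ ⟨0, by omega⟩ ⟨1, by omega⟩ rfl rfl rfl rfl
          rw [Fin.lt_def] at this
          rcases e with ⟨rfl, rfl, rfl, rfl⟩ | ⟨rfl, rfl, rfl, rfl⟩ <;> omega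
    · omega
  · omega

/-! ### Gluing is a bijection -/

/-- The gluing determines `p` and `q` from `π`. -/
lemma Glued.unique_right (h : Glued π p q c d) (h' : Glued π p₂ q₂ c₂ d₂) (hn : j + 4 ≤ n) :
    p = p₂ ∧ q = q₂ := by
  have hcd : c = c₂ ∧ d = d₂ := by
    have e := fun i hi => (h.high_iff hn i hi).symm.trans (h'.high_iff hn i hi)
    obtain ⟨h1, h2, -⟩ := h
    obtain ⟨h1', h2', -⟩ := h'
    have e1 := e ⟨c, by omega⟩ (by simp; omega)
    have e2 := e ⟨d, by omega⟩ (by simp; omega)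
    simp at e1 e2
    omega
  obtain ⟨rfl, rfl⟩ := hcd
  have hq : q = q₂ := by
    ext s
    have h1 := h.2.2.2.1 ⟨_, upCol_lt h.1 h.2.1 hn s⟩ s rfl
    have h2 := h'.2.2.2.1 ⟨_, upCol_lt h.1 h.2.1 hn s⟩ s rfl
    omega
  subst hq
  refine ⟨?_, rfl⟩
  obtain ⟨h1, h2, h3, h4, h5⟩ := h
  obtain ⟨-, -, h3', h4', h5'⟩ := h'
  ext i
  have hi := i.isLt
  by_cases hcd : (i : ℕ) = c ∨ (i : ℕ) = d
  · have hc : c < j + 3 := h1.trans h2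
    have e : i = ⟨c, hc⟩ ∨ i = ⟨d, h2⟩ := by simpa only [Fin.ext_iff] using hcd
    rcases h5 with h5 | h5 <;> rcases h5' with h5' | h5' <;>
    · have a := h5 ⟨c, by omega⟩ ⟨d, h2⟩ ⟨0, by omega⟩ ⟨1, by omega⟩ rfl rfl rfl rfl
      have a' := h5' ⟨c, by omega⟩ ⟨d, h2⟩ ⟨0, by omega⟩ ⟨1, by omega⟩ rfl rfl rfl rfl
      rw [Fin.lt_def] at a a'
      rcases e with rfl | rfl <;> omega
  · have a := h3 ⟨i, by omega⟩ i rfl (by simp; tauto) (by simp; tauto)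
    have a' := h3' ⟨i, by omega⟩ i rfl (by simp; tauto) (by simp; tauto)
    omega

/-- The gluing determines `π` from `p` and `q`. -/
lemma Glued.unique_left (h : Glued π p q c d) (h' : Glued π₂ p q c₂ d₂) (hn : j + 4 ≤ n) :
    π = π₂ := by
  have hcd : c = c₂ ∧ d = d₂ := by
    have e := fun i => (h.high_iff' hn i).symm.trans (h'.high_iff' hn i)
    obtain ⟨h1, h2, -⟩ := h
    obtain ⟨h1', h2', -⟩ := h'
    have e1 := e ⟨c, by omega⟩
    have e2 := e ⟨d, by omega⟩
    simp at e1 e2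
    omega
  obtain ⟨rfl, rfl⟩ := hcd
  ext i
  rcases h.cases hn i with ⟨h1, h2, h3, -⟩ | ⟨s, h1, h2⟩
  · rw [(h.2.2.1 i ⟨i, h1⟩ rfl h2 h3).1, (h'.2.2.1 i ⟨i, h1⟩ rfl h2 h3).1]
  · rw [h2, h'.2.2.2.1 i s h1]

/-- Any two permutations of the right sizes with matching orientations can be glued. -/
lemma exists_glued_of_pair (hn : j + 4 ≤ n) (p : Equiv.Perm (Fin (j + 3)))
    (q : Equiv.Perm (Fin (n - (j + 1))))
    (hpq : ((∀ u v : Fin (j + 3), (u : ℕ) + 1 = j + 3 → (v : ℕ) + 2 = j + 3 → p⁻¹ v < p⁻¹ u) ∧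
        ∀ s t : Fin (n - (j + 1)), (s : ℕ) = 0 → (t : ℕ) = 1 → q s < q t) ∨
      ((∀ u v : Fin (j + 3), (u : ℕ) + 1 = j + 3 → (v : ℕ) + 2 = j + 3 → p⁻¹ u < p⁻¹ v) ∧
        ∀ s t : Fin (n - (j + 1)), (s : ℕ) = 0 → (t : ℕ) = 1 → q t < q s)) :
    ∃ (π : Equiv.Perm (Fin n)) (c d : ℕ), Glued π p q c d := by
  obtain ⟨c, d, hcd, hlow, hmatch⟩ : ∃ c d : Fin (j + 3), c < d ∧
      (∀ i, i ≠ c → i ≠ d → (p i : ℕ) < j + 1) ∧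
      (((p c : ℕ) = j + 1 ∧ (p d : ℕ) = j + 2 ∧
        ∀ s t : Fin (n - (j + 1)), (s : ℕ) = 0 → (t : ℕ) = 1 → q s < q t) ∨
       ((p c : ℕ) = j + 2 ∧ (p d : ℕ) = j + 1 ∧
        ∀ s t : Fin (n - (j + 1)), (s : ℕ) = 0 → (t : ℕ) = 1 → q t < q s)) := by
    have hne : ∀ (i a : Fin (j + 3)), i ≠ p⁻¹ a → (p i : ℕ) ≠ a := by
      rintro i a h h'
      exact h (by rw [Equiv.Perm.eq_inv_iff_eq]; exact Fin.ext h')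
    rcases hpq with ⟨h1, h2⟩ | ⟨h1, h2⟩
    · refine ⟨p⁻¹ ⟨j + 1, by omega⟩, p⁻¹ ⟨j + 2, by omega⟩, h1 _ _ rfl rfl, ?_,
        Or.inl ⟨by simp, by simp, h2⟩⟩
      intro i ha hb
      have := hne _ _ ha
      have := hne _ _ hb
      have := (p i).isLt
      simp at *
      omega
    · refine ⟨p⁻¹ ⟨j + 2, by omega⟩, p⁻¹ ⟨j + 1, by omega⟩, h1 _ _ rfl rfl, ?_,
        Or.inr ⟨by simp, by simp, h2⟩⟩
      intro i ha hb
      have := hne _ _ ha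
      have := hne _ _ hb
      have := (p i).isLt
      simp at *
      omega
  have hcd' : (c : ℕ) < d := hcd
  have hd := d.isLt
  -- every column outside the low ones is `upCol` of a column of `Y''`
  have hup : ∀ i : Fin n, ¬ ((i : ℕ) < j + 3 ∧ (i : ℕ) ≠ c ∧ (i : ℕ) ≠ d) →
      ∃ s : Fin (n - (j + 1)), (i : ℕ) = upCol j c d s := by
    intro i hi
    have := i.isLt
    by_cases h1 : (i : ℕ) = c
    · exact ⟨⟨0, by omega⟩, by simp [upCol, h1]⟩
    by_cases h2 : (i : ℕ) = d
    · exact ⟨⟨1, by omega⟩, by simp [upCol, h2]⟩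
    refine ⟨⟨i - (j + 1), by omega⟩, ?_⟩
    unfold upCol; split_ifs <;> simp at * <;> omega
  have hex : ∀ i : Fin n, ∃ v : Fin n,
      (∀ i' : Fin (j + 3), (i : ℕ) = i' → (i : ℕ) ≠ c → (i : ℕ) ≠ d → (v : ℕ) = p i') ∧
      (∀ s : Fin (n - (j + 1)), (i : ℕ) = upCol j c d s → (v : ℕ) = q s + (j + 1)) := by
    intro i
    by_cases hi : (i : ℕ) < j + 3 ∧ (i : ℕ) ≠ c ∧ (i : ℕ) ≠ d
    · refine ⟨⟨p ⟨i, hi.1⟩, by omega⟩, ?_, ?_⟩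
      · intro i' h _ _
        obtain rfl : i' = ⟨i, hi.1⟩ := Fin.ext h.symm
        rfl
      · intro s hs
        exfalso
        unfold upCol at hs; split_ifs at hs <;> omega
    · obtain ⟨s, hs⟩ := hup i hi
      refine ⟨⟨q s + (j + 1), by omega⟩, ?_, ?_⟩
      · intro i' h h1 h2
        have := i'.isLt
        omega
      · intro t ht
        have a := upCol_lt_iff hcd' hd s t
        have b := upCol_lt_iff hcd' hd t s
        obtain rfl : s = t := Fin.ext (by omega)
        rfl
  choose F hF1 hF2 using hex
  have hFi : Function.Injective F := by
    intro x y hxy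
    by_cases hx : (x : ℕ) < j + 3 ∧ (x : ℕ) ≠ c ∧ (x : ℕ) ≠ d
    · have ex := hF1 x ⟨x, hx.1⟩ rfl hx.2.1 hx.2.2
      have lx := hlow ⟨x, hx.1⟩ (fun h => hx.2.1 (by rw [← h])) (fun h => hx.2.2 (by rw [← h]))
      by_cases hy : (y : ℕ) < j + 3 ∧ (y : ℕ) ≠ c ∧ (y : ℕ) ≠ d
      · have ey := hF1 y ⟨y, hy.1⟩ rfl hy.2.1 hy.2.2
        rw [hxy, ey] at ex
        have := p.injective (Fin.ext ex)
        simp only [Fin.mk.injEq] at this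
        exact Fin.ext this.symm
      · obtain ⟨t, ht⟩ := hup y hy
        have ey := hF2 y t ht
        rw [hxy] at ex
        omega
    · obtain ⟨s, hs⟩ := hup x hx
      have ex := hF2 x s hs
      by_cases hy : (y : ℕ) < j + 3 ∧ (y : ℕ) ≠ c ∧ (y : ℕ) ≠ d
      · have ey := hF1 y ⟨y, hy.1⟩ rfl hy.2.1 hy.2.2
        have ly := hlow ⟨y, hy.1⟩ (fun h => hy.2.1 (by rw [← h])) (fun h => hy.2.2 (by rw [← h]))
        rw [hxy] at ex
        omega
      · obtain ⟨t, ht⟩ := hup y hy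
        have ey := hF2 y t ht
        rw [hxy] at ex
        obtain rfl := q.injective (Fin.ext (show (q s : ℕ) = q t by omega))
        exact Fin.ext (by omega)
  refine ⟨Equiv.ofBijective F (Finite.injective_iff_bijective.1 hFi), c, d, hcd', hd, ?_, ?_, ?_⟩
  · intro i i' h h1 h2
    exact ⟨hF1 i i' h h1 h2, hlow i' (fun h' => h1 (by rw [h, h'])) (fun h' => h2 (by rw [h, h']))⟩
  · exact hF2
  · rcases hmatch with ⟨m1, m2, m3⟩ | ⟨m1, m2, m3⟩
    · left
      intro x y s t hx hy hs ht
      obtain rfl := Fin.ext hx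
      obtain rfl := Fin.ext hy
      exact ⟨m1, m2, m3 s t hs ht⟩
    · right
      intro x y s t hx hy hs ht
      obtain rfl := Fin.ext hx
      obtain rfl := Fin.ext hy
      exact ⟨m1, m2, m3 s t hs ht⟩

/-- If all dots in the lowest `j + 1` rows lie in the first `j + 3` columns, then exactly two
of these columns carry a higher dot. -/
lemma exists_high_columns (hn : j + 4 ≤ n) (π : Equiv.Perm (Fin n))
    (hπ : ∀ i, (π i : ℕ) < j + 1 → (i : ℕ) < j + 3) :
    ∃ c d : ℕ, c < d ∧ d < j + 3 ∧ ∀ i : Fin n, (i : ℕ) < j + 3 →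
      (j + 1 ≤ (π i : ℕ) ↔ ((i : ℕ) = c ∨ (i : ℕ) = d)) := by
  classical
  let S := Finset.univ.filter (fun i : Fin n => (π i : ℕ) < j + 1)
  let T := Finset.univ.filter (fun i : Fin n => (i : ℕ) < j + 3)
  have hS : S.card = j + 1 := by
    have : S = (Finset.univ.filter (fun i : Fin n => (i : ℕ) < j + 1)).map
        π.symm.toEmbedding := by
      ext i; simp [S]
    rw [this, Finset.card_map, Fin.card_filter_val_lt]; omega
  have hT : T.card = j + 3 := by
    simp only [T]; rw [Fin.card_filter_val_lt]; omega
  have hST : S ⊆ T := by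
    intro i; simp only [S, T, Finset.mem_filter, Finset.mem_univ, true_and]; exact hπ i
  have h2 : (T \ S).card = 2 := by rw [Finset.card_sdiff_of_subset hST]; omega
  obtain ⟨x, y, hxy, he⟩ := Finset.card_eq_two.1 h2
  have hm : ∀ i : Fin n, ((i : ℕ) < j + 3 ∧ j + 1 ≤ (π i : ℕ)) ↔ (i = x ∨ i = y) := by
    intro i
    have := Finset.ext_iff.1 he i
    simpa [S, T] using this
  have hx := (hm x).2 (Or.inl rfl)
  have hy := (hm y).2 (Or.inr rfl)
  rcases lt_or_gt_of_ne hxy with h | h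
  · refine ⟨x, y, h, hy.1, fun i hi => ?_⟩
    have := hm i
    simp only [Fin.ext_iff] at this
    tauto
  · refine ⟨y, x, h, hx.1, fun i hi => ?_⟩
    have := hm i
    simp only [Fin.ext_iff] at this
    tauto

/-- Every permutation whose low dots lie in the first `j + 3` columns arises by gluing. -/
lemma exists_glued_of_perm (hn : j + 4 ≤ n) (π : Equiv.Perm (Fin n))
    (hπ : ∀ i, (π i : ℕ) < j + 1 → (i : ℕ) < j + 3) :
    ∃ (p : Equiv.Perm (Fin (j + 3))) (q : Equiv.Perm (Fin (n - (j + 1)))) (c d : ℕ),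
      Glued π p q c d := by
  obtain ⟨c, d, hcd, hd, hhigh⟩ := exists_high_columns hn π hπ
  have hge : ∀ s : Fin (n - (j + 1)), j + 1 ≤ (π ⟨_, upCol_lt hcd hd hn s⟩ : ℕ) := by
    intro s
    by_contra hlt
    have h1 := hπ _ (not_le.1 hlt)
    apply hlt
    rw [hhigh _ h1]
    simp only at h1 ⊢
    unfold upCol at h1 ⊢
    split_ifs at h1 ⊢ <;> omega
  let q₀ : Fin (n - (j + 1)) → Fin (n - (j + 1)) := fun s =>
    ⟨(π ⟨_, upCol_lt hcd hd hn s⟩ : ℕ) - (j + 1), by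
      have := (π ⟨_, upCol_lt hcd hd hn s⟩).isLt
      have := hge s
      omega⟩
  have hq : Function.Injective q₀ := by
    intro s t hst
    have h1 := hge s
    have h2 := hge t
    simp only [q₀, Fin.mk.injEq] at hst
    have h3 := π.injective (Fin.ext (show (π ⟨_, upCol_lt hcd hd hn s⟩ : ℕ)
      = π ⟨_, upCol_lt hcd hd hn t⟩ by omega))
    simp only [Fin.mk.injEq] at h3
    have a := upCol_lt_iff hcd hd s t
    have b := upCol_lt_iff hcd hd t s
    exact Fin.ext (by omega)
  let q : Equiv.Perm (Fin (n - (j + 1))) :=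
    Equiv.ofBijective q₀ (Finite.injective_iff_bijective.1 hq)
  have hqv : ∀ (i : Fin n) (s : Fin (n - (j + 1))), (i : ℕ) = upCol j c d s →
      (π i : ℕ) = q s + (j + 1) := by
    intro i s hi
    obtain rfl : i = ⟨_, upCol_lt hcd hd hn s⟩ := Fin.ext hi
    have := hge s
    change _ = (π ⟨_, upCol_lt hcd hd hn s⟩ : ℕ) - (j + 1) + (j + 1)
    omega
  -- `A`, `B` are the heights in `Y'` given to the dots in columns `c`, `d`
  have hp : ∀ A B : ℕ, (A = j + 1 ∧ B = j + 2 ∨ A = j + 2 ∧ B = j + 1) →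
      ∃ p : Equiv.Perm (Fin (j + 3)),
        (∀ (i : Fin n) (i' : Fin (j + 3)), (i : ℕ) = i' → (i : ℕ) ≠ c → (i : ℕ) ≠ d →
          (π i : ℕ) = p i' ∧ (p i' : ℕ) < j + 1) ∧
        (∀ x : Fin (j + 3), (x : ℕ) = c → (p x : ℕ) = A) ∧
        (∀ x : Fin (j + 3), (x : ℕ) = d → (p x : ℕ) = B) := by
    intro A B hAB
    have hex : ∀ i' : Fin (j + 3), ∃ v : Fin (j + 3),
        (∀ i : Fin n, (i : ℕ) = i' → (i : ℕ) ≠ c → (i : ℕ) ≠ d →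
          (π i : ℕ) = v ∧ (v : ℕ) < j + 1) ∧
        ((i' : ℕ) = c → (v : ℕ) = A) ∧ ((i' : ℕ) = d → (v : ℕ) = B) := by
      intro i'
      have hi' := i'.isLt
      have hin : (i' : ℕ) < n := by omega
      by_cases h1 : (i' : ℕ) = c
      · exact ⟨⟨A, by omega⟩, fun i h => by omega, fun _ => rfl, fun _ => by omega⟩
      by_cases h2 : (i' : ℕ) = d
      · exact ⟨⟨B, by omega⟩, fun i h => by omega, fun _ => by omega, fun _ => rfl⟩
      have h3 := hhigh ⟨i', hin⟩ hi'
      simp only at h3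
      refine ⟨⟨π ⟨i', hin⟩, by omega⟩, fun i h _ _ => ?_, fun _ => by omega,
        fun _ => by omega⟩
      obtain rfl : i = ⟨i', hin⟩ := Fin.ext h
      exact ⟨rfl, by simp only; omega⟩
    choose F hF1 hF2 hF3 using hex
    have hFi : Function.Injective F := by
      intro x y hxy
      have ax := hF1 x ⟨x, by omega⟩ rfl
      have ay := hF1 y ⟨y, by omega⟩ rfl
      have bx := hF2 x
      have bY := hF2 y
      have cx := hF3 x
      have cy := hF3 y
      simp only at ax ay
      rw [hxy] at ax bx cx
      by_cases hx : (x : ℕ) = c ∨ (x : ℕ) = d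
      · exact Fin.ext (by omega)
      · by_cases hy : (y : ℕ) = c ∨ (y : ℕ) = d
        · exact Fin.ext (by omega)
        · rw [not_or] at hx hy
          have := π.injective (Fin.ext ((ax hx.1 hx.2).1.trans (ay hy.1 hy.2).1.symm))
          simp only [Fin.mk.injEq] at this
          exact Fin.ext this
    exact ⟨Equiv.ofBijective F (Finite.injective_iff_bijective.1 hFi),
      fun i i' => hF1 i' i, hF2, hF3⟩
  have h0 : 0 < n - (j + 1) := by omega
  have h1 : 1 < n - (j + 1) := by omega
  rcases lt_or_gt_of_ne (show q ⟨0, h0⟩ ≠ q ⟨1, h1⟩ from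
    fun h => by simpa using q.injective h) with ho | ho
  · obtain ⟨p, hp1, hp2, hp3⟩ := hp (j + 1) (j + 2) (Or.inl ⟨rfl, rfl⟩)
    refine ⟨p, q, c, d, hcd, hd, hp1, hqv, Or.inl ?_⟩
    intro x y s t hx hy hs ht
    obtain rfl : s = ⟨0, h0⟩ := Fin.ext hs
    obtain rfl : t = ⟨1, h1⟩ := Fin.ext ht
    exact ⟨hp2 x hx, hp3 y hy, ho⟩
  · obtain ⟨p, hp1, hp2, hp3⟩ := hp (j + 2) (j + 1) (Or.inr ⟨rfl, rfl⟩)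
    refine ⟨p, q, c, d, hcd, hd, hp1, hqv, Or.inr ?_⟩
    intro x y s t hx hy hs ht
    obtain rfl : s = ⟨0, h0⟩ := Fin.ext hs
    obtain rfl : t = ⟨1, h1⟩ := Fin.ext ht
    exact ⟨hp2 x hx, hp3 y hy, ho⟩

/-- The two halves of a glued permutation have the same orientation. -/
lemma Glued.orientation (h : Glued π p q c d) (hn : j + 4 ≤ n) :
    ((∀ u v : Fin (j + 3), (u : ℕ) + 1 = j + 3 → (v : ℕ) + 2 = j + 3 → p⁻¹ v < p⁻¹ u) ∧
        ∀ s t : Fin (n - (j + 1)), (s : ℕ) = 0 → (t : ℕ) = 1 → q s < q t) ∨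
      ((∀ u v : Fin (j + 3), (u : ℕ) + 1 = j + 3 → (v : ℕ) + 2 = j + 3 → p⁻¹ u < p⁻¹ v) ∧
        ∀ s t : Fin (n - (j + 1)), (s : ℕ) = 0 → (t : ℕ) = 1 → q t < q s) := by
  obtain ⟨h1, h2, -, -, h5⟩ := h
  have hc : c < j + 3 := by omega
  refine h5.imp (fun h5 => ⟨fun u v hu hv => ?_, fun s t hs ht =>
      (h5 ⟨c, hc⟩ ⟨d, h2⟩ s t rfl rfl hs ht).2.2⟩)
    (fun h5 => ⟨fun u v hu hv => ?_, fun s t hs ht =>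
      (h5 ⟨c, hc⟩ ⟨d, h2⟩ s t rfl rfl hs ht).2.2⟩)
  · have a := h5 ⟨c, hc⟩ ⟨d, h2⟩ ⟨0, by omega⟩ ⟨1, by omega⟩ rfl rfl rfl rfl
    have e1 : v = p ⟨c, hc⟩ := Fin.ext (by omega)
    have e2 : u = p ⟨d, h2⟩ := Fin.ext (by omega)
    simpa [e1, e2] using h1
  · have a := h5 ⟨c, hc⟩ ⟨d, h2⟩ ⟨0, by omega⟩ ⟨1, by omega⟩ rfl rfl rfl rfl
    have e1 : u = p ⟨c, hc⟩ := Fin.ext (by omega)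
    have e2 : v = p ⟨d, h2⟩ := Fin.ext (by omega)
    simpa [e1, e2] using h1

/-! ### Gluing, diagrams and patterns -/

section
variable {b : Fin n → ℕ} {b' : Fin (j + 3) → ℕ} {b'' : Fin (n - (j + 1)) → ℕ}

/-- Membership of cells of the left part agrees in `Y` and `Y'`. -/
lemma Glued.cell_left (h : Glued π p q c d) (hn : j + 4 ≤ n)
    (hhigh : ∀ v : Fin n, j + 1 ≤ (v : ℕ) → j + 4 ≤ b v)
    (hb' : ∀ (v : Fin n) (t : Fin (j + 3)), (v : ℕ) = t → b' t = min (b v) (j + 3))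
    (x y : Fin n) (x' y' : Fin (j + 3)) (hx : (x : ℕ) = x') (hy : (y : ℕ) = y') :
    (x' : ℕ) + 1 ≤ b' (p y') ↔ (x : ℕ) + 1 ≤ b (π y) := by
  have hy1 := h.high_iff hn y (by omega)
  have hy2 := h.high_iff' hn y'
  have hy3 := h.2.2.1 y y' hy
  have hx' := x'.isLt
  by_cases hyc : (y : ℕ) = c ∨ (y : ℕ) = d
  · have a := hhigh (π y) (by omega)
    have a' := hhigh ⟨p y', by omega⟩ (by simp only; omega)
    rw [hb' ⟨p y', by omega⟩ (p y') rfl]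
    omega
  · rw [hb' (π y) (p y') (by omega)]
    omega

/-- Membership of cells of the upper part agrees in `Y` and `Y''`. -/
lemma Glued.cell_right (h : Glued π p q c d)
    (hhigh : ∀ v : Fin n, j + 1 ≤ (v : ℕ) → j + 4 ≤ b v)
    (hb'' : ∀ (v : Fin n) (s : Fin (n - (j + 1))), (v : ℕ) = s + (j + 1) →
      b'' s = b v - (j + 1))
    (x y : Fin n) (s t : Fin (n - (j + 1))) (hx : (x : ℕ) = upCol j c d s)
    (hy : (y : ℕ) = upCol j c d t) :
    (s : ℕ) + 1 ≤ b'' (q t) ↔ (x : ℕ) + 1 ≤ b (π y) := by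
  have e := h.2.2.2.1 y t hy
  have a := hhigh (π y) (by omega)
  rw [hb'' (π y) (q t) e]
  have := h.1
  have := h.2.1
  unfold upCol at hx
  split_ifs at hx <;> omega

lemma Glued.transversal_iff (h : Glued π p q c d) (hn : j + 4 ≤ n)
    (hhigh : ∀ v : Fin n, j + 1 ≤ (v : ℕ) → j + 4 ≤ b v)
    (hb' : ∀ (v : Fin n) (t : Fin (j + 3)), (v : ℕ) = t → b' t = min (b v) (j + 3))
    (hb'' : ∀ (v : Fin n) (s : Fin (n - (j + 1))), (v : ℕ) = s + (j + 1) →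
      b'' s = b v - (j + 1)) :
    IsTransversal b π ↔ IsTransversal b' p ∧ IsTransversal b'' q := by
  constructor
  · intro H
    refine ⟨fun i => ?_, fun s => ?_⟩
    · exact (h.cell_left hn hhigh hb' ⟨i, by omega⟩ ⟨i, by omega⟩ i i rfl rfl).2 (H _)
    · exact (h.cell_right hhigh hb'' ⟨_, upCol_lt h.1 h.2.1 hn s⟩
        ⟨_, upCol_lt h.1 h.2.1 hn s⟩ s s rfl rfl).2 (H _)
  · rintro ⟨H1, H2⟩ i
    rcases h.cases hn i with ⟨h1, -⟩ | ⟨s, h1, -⟩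
    · exact (h.cell_left hn hhigh hb' i i ⟨i, h1⟩ ⟨i, h1⟩ rfl rfl).1 (H1 _)
    · exact (h.cell_right hhigh hb'' i i s s h1 h1).1 (H2 _)

/-- An occurrence using a dot of height less than `j + 1` is confined to the first `j + 3`
columns, so it lives in `Y'`; otherwise all its dots lie in `Y''`. -/
lemma Glued.contains_iff (h : Glued π p q c d) (hn : j + 4 ≤ n)
    (hlow : ∀ v : Fin n, (v : ℕ) < j + 1 → b v ≤ j + 3)
    (hhigh : ∀ v : Fin n, j + 1 ≤ (v : ℕ) → j + 4 ≤ b v)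
    (hb' : ∀ (v : Fin n) (t : Fin (j + 3)), (v : ℕ) = t → b' t = min (b v) (j + 3))
    (hb'' : ∀ (v : Fin n) (s : Fin (n - (j + 1))), (v : ℕ) = s + (j + 1) →
      b'' s = b v - (j + 1)) {k : ℕ} (σ : Equiv.Perm (Fin k)) :
    ContainsIn b π σ ↔ ContainsIn b' p σ ∨ ContainsIn b'' q σ := by
  constructor
  · rintro ⟨f, f1, f2, f3⟩
    by_cases hl : ∃ t, (π (f t) : ℕ) < j + 1
    · obtain ⟨t, ht⟩ := hl
      have hf : ∀ s, (f s : ℕ) < j + 3 := fun s => by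
        have := hlow _ ht
        have := f3 s t
        omega
      refine Or.inl ⟨fun s => ⟨f s, hf s⟩, fun s t hst => f1 hst, fun s t => ?_, fun s t => ?_⟩
      · rw [f2, h.lt_iff_left hn (f s) (f t) _ _ rfl rfl]
      · exact (h.cell_left hn hhigh hb' (f s) (f t) _ _ rfl rfl).2 (f3 s t)
    · have hg : ∀ t, ∃ s : Fin (n - (j + 1)), (f t : ℕ) = upCol j c d s ∧
          (π (f t) : ℕ) = q s + (j + 1) := fun t => by
        rcases h.cases hn (f t) with ⟨-, -, -, h'⟩ | h'
        · exact absurd ⟨t, h'⟩ hl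
        · exact h'
      choose g g1 g2 using hg
      refine Or.inr ⟨g, fun s t hst => ?_, fun s t => ?_, fun s t => ?_⟩
      · have a : (f s : ℕ) < f t := f1 hst
        rw [g1, g1, upCol_lt_iff h.1 h.2.1] at a
        exact a
      · rw [f2, Fin.lt_def, Fin.lt_def, g2, g2]
        omega
      · exact (h.cell_right hhigh hb'' _ _ _ _ (g1 s) (g1 t)).2 (f3 s t)
  · rintro (⟨f, f1, f2, f3⟩ | ⟨f, f1, f2, f3⟩)
    · refine ⟨fun s => ⟨f s, by omega⟩, fun s t hst => f1 hst, fun s t => ?_, fun s t => ?_⟩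
      · exact (f2 s t).trans
          (h.lt_iff_left hn ⟨f s, by omega⟩ ⟨f t, by omega⟩ (f s) (f t) rfl rfl)
      · exact (h.cell_left hn hhigh hb' _ _ _ _ rfl rfl).1 (f3 s t)
    · refine ⟨fun s => ⟨_, upCol_lt h.1 h.2.1 hn (f s)⟩, fun s t hst => ?_, fun s t => ?_,
        fun s t => ?_⟩
      · exact (upCol_lt_iff h.1 h.2.1 _ _).2 (f1 hst)
      · rw [f2, Fin.lt_def, Fin.lt_def, h.2.2.2.1 _ (f s) rfl, h.2.2.2.1 _ (f t) rfl]
        omega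
      · exact (h.cell_right hhigh hb'' _ _ _ _ rfl rfl).1 (f3 s t)

/-! ### Counting -/

/-- The counting identity, with the diagrams `b'` and `b''` described by equations and the
critical point by bounds on the row lengths below and above it. -/
lemma card_eq_of_critical (hn : j + 4 ≤ n)
    (hlow : ∀ v : Fin n, (v : ℕ) < j + 1 → b v ≤ j + 3)
    (hhigh : ∀ v : Fin n, j + 1 ≤ (v : ℕ) → j + 4 ≤ b v)
    (hb' : ∀ (v : Fin n) (t : Fin (j + 3)), (v : ℕ) = t → b' t = min (b v) (j + 3))
    (hb'' : ∀ (v : Fin n) (s : Fin (n - (j + 1))), (v : ℕ) = s + (j + 1) →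
      b'' s = b v - (j + 1)) {k : ℕ} (σ : Equiv.Perm (Fin k)) :
    SYcard b σ = SYcardTopAsc b' σ * SYcardLeftAsc b'' σ +
      SYcardTopDesc b' σ * SYcardLeftDesc b'' σ := by
  unfold SYcard SYcardTopAsc SYcardLeftAsc SYcardTopDesc SYcardLeftDesc
  rw [← Nat.card_prod, ← Nat.card_prod, ← Nat.card_sum]
  have key : ∀ {π : Equiv.Perm (Fin n)} {p : Equiv.Perm (Fin (j + 3))}
      {q : Equiv.Perm (Fin (n - (j + 1)))} {c d : ℕ}, Glued π p q c d →
      ((IsTransversal b π ∧ ¬ ContainsIn b π σ) ↔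
        (IsTransversal b' p ∧ ¬ ContainsIn b' p σ) ∧
        (IsTransversal b'' q ∧ ¬ ContainsIn b'' q σ)) := by
    intro π p q c d h
    rw [h.transversal_iff hn hhigh hb' hb'', h.contains_iff hn hlow hhigh hb' hb'' σ]
    tauto
  refine (Nat.card_congr (Equiv.ofBijective (fun x => ?_) ⟨?_, ?_⟩)).symm
  · exact x.elim
      (fun x =>
        have H := exists_glued_of_pair hn x.1.1 x.2.1 (Or.inl ⟨x.1.2.2.2, x.2.2.2.2⟩)
        ⟨H.choose, (key H.choose_spec.choose_spec.choose_spec).2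
          ⟨⟨x.1.2.1, x.1.2.2.1⟩, ⟨x.2.2.1, x.2.2.2.1⟩⟩⟩)
      (fun x =>
        have H := exists_glued_of_pair hn x.1.1 x.2.1 (Or.inr ⟨x.1.2.2.2, x.2.2.2.2⟩)
        ⟨H.choose, (key H.choose_spec.choose_spec.choose_spec).2
          ⟨⟨x.1.2.1, x.1.2.2.1⟩, ⟨x.2.2.1, x.2.2.2.1⟩⟩⟩)
  · rintro (⟨⟨p, hp⟩, ⟨q, hq⟩⟩ | ⟨⟨p, hp⟩, ⟨q, hq⟩⟩)
      (⟨⟨p₂, hp₂⟩, ⟨q₂, hq₂⟩⟩ | ⟨⟨p₂, hp₂⟩, ⟨q₂, hq₂⟩⟩) heq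
    · have H := exists_glued_of_pair hn p q (Or.inl ⟨hp.2.2, hq.2.2⟩)
      have H₂ := exists_glued_of_pair hn p₂ q₂ (Or.inl ⟨hp₂.2.2, hq₂.2.2⟩)
      have e : H.choose = H₂.choose := congrArg Subtype.val heq
      obtain ⟨c, d, h⟩ := H.choose_spec
      obtain ⟨c₂, d₂, h₂⟩ := H₂.choose_spec
      rw [← e] at h₂
      obtain ⟨rfl, rfl⟩ := h.unique_right h₂ hn
      rfl
    · have H := exists_glued_of_pair hn p q (Or.inl ⟨hp.2.2, hq.2.2⟩)
      have H₂ := exists_glued_of_pair hn p₂ q₂ (Or.inr ⟨hp₂.2.2, hq₂.2.2⟩)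
      have e : H.choose = H₂.choose := congrArg Subtype.val heq
      obtain ⟨c, d, h⟩ := H.choose_spec
      obtain ⟨c₂, d₂, h₂⟩ := H₂.choose_spec
      rw [← e] at h₂
      obtain ⟨rfl, rfl⟩ := h.unique_right h₂ hn
      exact absurd (hq.2.2 ⟨0, by omega⟩ ⟨1, by omega⟩ rfl rfl)
        (hq₂.2.2 ⟨0, by omega⟩ ⟨1, by omega⟩ rfl rfl).asymm
    · have H := exists_glued_of_pair hn p q (Or.inr ⟨hp.2.2, hq.2.2⟩)
      have H₂ := exists_glued_of_pair hn p₂ q₂ (Or.inl ⟨hp₂.2.2, hq₂.2.2⟩)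
      have e : H.choose = H₂.choose := congrArg Subtype.val heq
      obtain ⟨c, d, h⟩ := H.choose_spec
      obtain ⟨c₂, d₂, h₂⟩ := H₂.choose_spec
      rw [← e] at h₂
      obtain ⟨rfl, rfl⟩ := h.unique_right h₂ hn
      exact absurd (hq.2.2 ⟨0, by omega⟩ ⟨1, by omega⟩ rfl rfl)
        (hq₂.2.2 ⟨0, by omega⟩ ⟨1, by omega⟩ rfl rfl).asymm
    · have H := exists_glued_of_pair hn p q (Or.inr ⟨hp.2.2, hq.2.2⟩)
      have H₂ := exists_glued_of_pair hn p₂ q₂ (Or.inr ⟨hp₂.2.2, hq₂.2.2⟩)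
      have e : H.choose = H₂.choose := congrArg Subtype.val heq
      obtain ⟨c, d, h⟩ := H.choose_spec
      obtain ⟨c₂, d₂, h₂⟩ := H₂.choose_spec
      rw [← e] at h₂
      obtain ⟨rfl, rfl⟩ := h.unique_right h₂ hn
      rfl
  · rintro ⟨π, hπ⟩
    obtain ⟨p, q, c, d, h⟩ := exists_glued_of_perm hn π (fun i hi => by
      have := hlow _ hi
      have := hπ.1 i
      omega)
    have hk := (key h).1 hπ
    rcases h.orientation hn with o | o
    · refine ⟨Sum.inl ⟨⟨p, hk.1.1, hk.1.2, o.1⟩, ⟨q, hk.2.1, hk.2.2, o.2⟩⟩, Subtype.ext ?_⟩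
      have H := exists_glued_of_pair hn p q (Or.inl o)
      obtain ⟨c₂, d₂, h₂⟩ := H.choose_spec
      exact h₂.unique_left h hn
    · refine ⟨Sum.inr ⟨⟨p, hk.1.1, hk.1.2, o.1⟩, ⟨q, hk.2.1, hk.2.2, o.2⟩⟩, Subtype.ext ?_⟩
      have H := exists_glued_of_pair hn p q (Or.inr o)
      obtain ⟨c₂, d₂, h₂⟩ := H.choose_spec
      exact h₂.unique_left h hn

end
end

theorem stmt7 (n : ℕ) (b : Fin n → ℕ) (hmono : Monotone b)
    (hb : ∀ y : Fin n, (y : ℕ) + 1 ≤ b y ∧ b y ≤ n)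
    (k : ℕ) (σ : Equiv.Perm (Fin k))
    (j : ℕ) (hj : j + 1 < n)
    (hcrit : b ⟨j, Nat.lt_of_succ_lt hj⟩ < b ⟨j + 1, hj⟩)
    (hidx : b ⟨j, Nat.lt_of_succ_lt hj⟩ = j + 3) :
    SYcard b σ =
      SYcardTopAsc (fun t : Fin (j + 3) => min (b ⟨(t : ℕ), by
          have h1 := t.isLt
          have h2 := (hb ⟨j, Nat.lt_of_succ_lt hj⟩).2
          omega⟩) (j + 3)) σ *
        SYcardLeftAsc (fun s : Fin (n - (j + 1)) =>
          b ⟨(j + 1) + (s : ℕ), by have := s.isLt; omega⟩ - (j + 1)) σ +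
      SYcardTopDesc (fun t : Fin (j + 3) => min (b ⟨(t : ℕ), by
          have h1 := t.isLt
          have h2 := (hb ⟨j, Nat.lt_of_succ_lt hj⟩).2
          omega⟩) (j + 3)) σ *
        SYcardLeftDesc (fun s : Fin (n - (j + 1)) =>
          b ⟨(j + 1) + (s : ℕ), by have := s.isLt; omega⟩ - (j + 1)) σ := by
  refine card_eq_of_critical ?_ ?_ ?_ ?_ ?_ σ
  · have := (hb ⟨j + 1, hj⟩).2
    omega
  · intro v hv
    rw [← hidx]
    exact hmono (Fin.le_def.2 (by simp only; omega))
  · intro v hv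
    have := hmono (show (⟨j + 1, hj⟩ : Fin n) ≤ v from Fin.le_def.2 hv)
    omega
  · intro v t hvt
    have e : v = ⟨t, by omega⟩ := Fin.ext hvt
    rw [e]
  · intro v s hvs
    have e : v = ⟨(j + 1) + s, by omega⟩ := Fin.ext (by simp only; omega)
    rw [e]
end

section
/- Let σ = (312) or σ = (321), and let Y be a Young diagram of size n given by b such that, for some k ≥ 1, b(t) = k + 2 for all 1 ≤ t ≤ k and b(k+1) > k + 2 (the bottom critical point of Y is 2-critical with exactly k rows below it). Let Y'' be the Young diagram of size n − k given by b''(t) = b(k + t) − k. Then |S_Y(σ)| = c_{k+1}·|S_{↘Y''}(σ)| + (c_{k+2} − c_{k+1})·|S_{↗Y''}(σ)|, and |S_{↘Y}(σ)| = c_k·|S_{↘Y''}(σ)| + (c_{k+1} − c_k)·|S_{↗Y''}(σ)|. -/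
/-!
The `k` lowest rows of the diagram have length `k + 2`, so in a transversal `π` their dots lie in the
first `k + 2` columns, which contain exactly two further dots. Hence `π` is determined by the
standardization `ρ` of its first `k + 2` columns and the standardization `τ` of its rows above the
`k`-th one; the only constraint on the pair is that `ρ` and `τ` agree on the order of the two common
dots, which are the two largest values of `ρ` and the two leftmost columns of `τ` (`exists_comb`,
`comb_inj`). An occurrence of the pattern in the diagram lies either in the first `k + 2` columns or
above the `k` lowest rows, so `π` avoids the pattern in `Y` iff `ρ` avoids it and `τ` avoids it in
`Y''` (`containsIn_comb`). This gives a sum of two products (`card_comb`).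

It remains to count the avoiders `ρ`. Both patterns start with their largest entry and differ in the
order of the other two, so they are treated together via a relation `R` which is `<` for `312` and
`>` for `321`. Splitting off the first entry gives the same ballot recursion in both cases, whence
`c_n` avoiders of length `n` (`card_av`). Deleting the second entry is a bijection from the avoiders
of length `m + 2` that start with a descent to all those of length `m + 1`, and preserves the order
of the two largest values when `m ≥ 1` (`card_leftDesc_aux`, `topDesc_ins_one`). The
reverse-complement of the inverse preserves both patterns and exchanges an initial descent with a
descent of the two largest values (`card_topDesc`).
-/

open Equiv

/-! ### Counting subtypes -/

theorem card_split {α : Type*} [Finite α] (P Q : α → Prop) :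
    Nat.card {x // P x} = Nat.card {x // P x ∧ Q x} + Nat.card {x // P x ∧ ¬ Q x} := by
  classical
  have := Fintype.ofFinite α
  simp only [Nat.card_eq_fintype_card, Fintype.card_subtype]
  rw [← Finset.filter_filter, ← Finset.filter_filter,
    Finset.card_filter_add_card_filter_not]

theorem card_bij {α β : Type*} {P : α → Prop} {Q : β → Prop} (f : α → β)
    (h1 : ∀ x, P x → Q (f x)) (h2 : ∀ x y, P x → P y → f x = f y → x = y)
    (h3 : ∀ y, Q y → ∃ x, P x ∧ f x = y) :
    Nat.card {x // P x} = Nat.card {y // Q y} := by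
  refine Nat.card_eq_of_bijective (fun x => ⟨f x.1, h1 x.1 x.2⟩) ⟨?_, ?_⟩
  · rintro ⟨x, hx⟩ ⟨y, hy⟩ h
    exact Subtype.ext (h2 x y hx hy (congrArg Subtype.val h))
  · rintro ⟨y, hy⟩
    obtain ⟨x, hx, rfl⟩ := h3 y hy
    exact ⟨⟨x, hx⟩, rfl⟩

theorem card_prod {α β : Type*} [Finite α] [Finite β] (P : α → Prop) (Q : β → Prop) :
    Nat.card {x : α × β // P x.1 ∧ Q x.2} = Nat.card {x // P x} * Nat.card {y // Q y} := by
  rw [← Nat.card_prod]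
  exact Nat.card_congr (Equiv.subtypeProdEquivProd)

/-! ### Inserting one entry into a permutation -/

/-- The permutation of length `n + 1` that sends `i` to `j` and whose remaining entries, after
standardization, form `e`. -/
def ins {n : ℕ} (i j : Fin (n + 1)) (e : Perm (Fin n)) : Perm (Fin (n + 1)) :=
  (finSuccEquiv' i).trans ((optionCongr e).trans (finSuccEquiv' j).symm)

theorem ins_self {n : ℕ} (i j : Fin (n + 1)) (e : Perm (Fin n)) : ins i j e i = j := by
  simp [ins]

theorem ins_succAbove {n : ℕ} (i j : Fin (n + 1)) (e : Perm (Fin n)) (x : Fin n) :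
    ins i j e (i.succAbove x) = j.succAbove (e x) := by
  simp [ins]

theorem ins_inj {n : ℕ} {i j j' : Fin (n + 1)} {e e' : Perm (Fin n)}
    (h : ins i j e = ins i j' e') : j = j' ∧ e = e' := by
  have h0 : j = j' := by rw [← ins_self i j e, h, ins_self]
  subst h0
  refine ⟨rfl, Equiv.ext fun x => ?_⟩
  have := congrArg (fun p => p (i.succAbove x)) h
  simpa [ins_succAbove] using this

/-- Every permutation arises by insertion at any prescribed position. -/
theorem exists_ins {n : ℕ} (ρ : Perm (Fin (n + 1))) (i : Fin (n + 1)) :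
    ∃ e, ρ = ins i (ρ i) e := by
  have h : ∀ x, ∃ y, (ρ i).succAbove y = ρ (i.succAbove x) := fun x =>
    Fin.exists_succAbove_eq (fun h => Fin.succAbove_ne i x (ρ.injective h))
  choose f hf using h
  have hinj : Function.Injective f := fun x y hxy => by
    have : ρ (i.succAbove x) = ρ (i.succAbove y) := by rw [← hf, ← hf, hxy]
    exact Fin.succAbove_right_injective (ρ.injective this)
  refine ⟨Equiv.ofBijective f (Finite.injective_iff_bijective.1 hinj), Equiv.ext fun x => ?_⟩
  rcases Fin.eq_self_or_eq_succAbove i x with rfl | ⟨y, rfl⟩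
  · rw [ins_self]
  · rw [ins_succAbove, ← hf]; rfl

/-! ### Avoiders of length `n` are counted by the Catalan numbers -/

/-- Avoidance of the length-three pattern that starts with its largest entry and whose last two
entries are related by `R`: with `R = (· < ·)` this is `312`, with `R = (· > ·)` it is `321`. -/
def Av (R : ℕ → ℕ → Prop) {n : ℕ} (π : Perm (Fin n)) : Prop :=
  ∀ x y z : Fin n, x < y → y < z → π y < π x → π z < π x → ¬ R (π y) (π z)

/-- No two entries smaller than `L` form, in order of position, an `R`-related pair; so the values
below `L` appear in decreasing order for `R = (· < ·)` and in increasing order for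
`R = (· > ·)`. -/
def MonoBelow (R : ℕ → ℕ → Prop) (L : ℕ) {n : ℕ} (π : Perm (Fin n)) : Prop :=
  ∀ y z : Fin n, y < z → (π y : ℕ) < L → (π z : ℕ) < L → ¬ R (π y) (π z)

theorem R_succAbove {R : ℕ → ℕ → Prop} (hR : R = (· < ·) ∨ R = (· > ·)) {n : ℕ}
    (j : Fin (n + 1)) (x y : Fin n) : R (j.succAbove x) (j.succAbove y) ↔ R x y := by
  rcases hR with rfl | rfl <;> simp [Fin.succAbove_lt_succAbove_iff]

theorem succAbove_lt_iff {n : ℕ} (j : Fin (n + 1)) (x : Fin n) :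
    j.succAbove x < j ↔ (x : ℕ) < j := by
  rw [Fin.succAbove_lt_iff_castSucc_lt, Fin.lt_def]; rfl

/-- Prepending the value `j` creates a forbidden pattern exactly when two entries below `j` are
`R`-related. -/
theorem av_ins_zero {R : ℕ → ℕ → Prop} (hR : R = (· < ·) ∨ R = (· > ·)) {n : ℕ}
    (j : Fin (n + 1)) (e : Perm (Fin n)) :
    Av R (ins 0 j e) ↔ Av R e ∧ MonoBelow R j e := by
  constructor
  · intro h
    constructor
    · intro x y z hxy hyz h1 h2
      have := h (Fin.succAbove 0 x) (Fin.succAbove 0 y) (Fin.succAbove 0 z)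
      simp only [ins_succAbove, Fin.succAbove_lt_succAbove_iff, R_succAbove hR] at this
      exact this hxy hyz h1 h2
    · intro y z hyz h1 h2
      have := h 0 (Fin.succAbove 0 y) (Fin.succAbove 0 z)
      simp only [ins_self, ins_succAbove, Fin.succAbove_lt_succAbove_iff, R_succAbove hR,
        succAbove_lt_iff] at this
      exact this (by simp) hyz h1 h2
  · rintro ⟨h1, h2⟩ x y z hxy hyz
    rcases Fin.eq_self_or_eq_succAbove 0 z with rfl | ⟨z, rfl⟩
    · exact absurd hyz (by simp)
    rcases Fin.eq_self_or_eq_succAbove 0 y with rfl | ⟨y, rfl⟩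
    · exact absurd hxy (by simp)
    rcases Fin.eq_self_or_eq_succAbove 0 x with rfl | ⟨x, rfl⟩
    · simp only [ins_self, ins_succAbove, Fin.succAbove_lt_succAbove_iff, R_succAbove hR,
        succAbove_lt_iff] at hyz ⊢
      exact h2 y z hyz
    · simp only [ins_succAbove, Fin.succAbove_lt_succAbove_iff, R_succAbove hR] at hxy hyz ⊢
      exact h1 x y z hxy hyz

theorem MonoBelow.mono {R : ℕ → ℕ → Prop} {n L L' : ℕ} (h : L ≤ L') {e : Perm (Fin n)}
    (he : MonoBelow R L' e) : MonoBelow R L e :=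
  fun y z hyz h1 h2 => he y z hyz (h1.trans_le h) (h2.trans_le h)

theorem succAbove_val {n : ℕ} (j : Fin (n + 1)) (x : Fin n) :
    (j.succAbove x : ℕ) = if (x : ℕ) < j then (x : ℕ) else x + 1 := by
  unfold Fin.succAbove
  split_ifs with h1 h2 h2 <;> simp_all [Fin.lt_def]

theorem monoBelow_ins_of_le {R : ℕ → ℕ → Prop} (hR : R = (· < ·) ∨ R = (· > ·)) {n L : ℕ}
    (j : Fin (n + 1)) (e : Perm (Fin n)) (hj : L ≤ j) (he : MonoBelow R j e) :
    MonoBelow R L (ins 0 j e) := by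
  intro y z hyz h1 h2
  rcases Fin.eq_self_or_eq_succAbove 0 z with rfl | ⟨z, rfl⟩
  · exact absurd hyz (by simp)
  rcases Fin.eq_self_or_eq_succAbove 0 y with rfl | ⟨y, rfl⟩
  · rw [ins_self] at h1; omega
  · simp only [ins_succAbove, Fin.succAbove_lt_succAbove_iff, R_succAbove hR] at hyz h1 h2 ⊢
    rw [succAbove_val] at h1 h2
    refine he y z hyz ?_ ?_
    · split_ifs at h1 <;> omega
    · split_ifs at h2 <;> omega

/-- Among the leading values `j ≤ L` exactly one is compatible with `MonoBelow R (L + 1)`: it is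
`L` for `R = (· < ·)` and `0` for `R = (· > ·)`. This is the only place where the recursions for
the two patterns differ, and the difference does not affect the count. -/
theorem monoBelow_ins_of_gt {R : ℕ → ℕ → Prop} (hR : R = (· < ·) ∨ R = (· > ·)) {n L : ℕ}
    (hL : L ≤ n) :
    ∃ j₀ : Fin (n + 1), (j₀ : ℕ) ≤ L ∧ ∀ (j : Fin (n + 1)) (e : Perm (Fin n)), (j : ℕ) ≤ L →
      (MonoBelow R (L + 1) (ins 0 j e) ↔ j = j₀ ∧ MonoBelow R L e) := by
  have key : ∀ j₀ : Fin (n + 1), (∀ j : Fin (n + 1), (j : ℕ) ≤ L →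
      ((∀ x : Fin n, (j.succAbove x : ℕ) < L + 1 → ¬ R j (j.succAbove x)) ↔ j = j₀)) →
      ∀ (j : Fin (n + 1)) (e : Perm (Fin n)), (j : ℕ) ≤ L →
      (MonoBelow R (L + 1) (ins 0 j e) ↔ j = j₀ ∧ MonoBelow R L e) := by
    intro j₀ h j e hj
    rw [← h j hj]
    have hlt : ∀ x : Fin n, (j.succAbove x : ℕ) < L + 1 ↔ (x : ℕ) < L := by
      intro x
      rw [succAbove_val]
      split_ifs <;> omega
    constructor
    · intro hm
      constructor
      · intro x hx
        have := hm 0 (Fin.succAbove 0 (e.symm x)) (by simp)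
        simp only [ins_self, ins_succAbove, Equiv.apply_symm_apply] at this
        exact this (by omega) hx
      · intro y z hyz h1 h2
        have := hm (Fin.succAbove 0 y) (Fin.succAbove 0 z)
        simp only [ins_succAbove, Fin.succAbove_lt_succAbove_iff, R_succAbove hR, hlt] at this
        exact this hyz h1 h2
    · rintro ⟨h1, h2⟩ y z hyz
      rcases Fin.eq_self_or_eq_succAbove 0 z with rfl | ⟨z, rfl⟩
      · exact absurd hyz (by simp)
      rcases Fin.eq_self_or_eq_succAbove 0 y with rfl | ⟨y, rfl⟩
      · simp only [ins_self, ins_succAbove]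
        exact fun _ => h1 _
      · simp only [ins_succAbove, Fin.succAbove_lt_succAbove_iff, R_succAbove hR, hlt] at hyz ⊢
        exact h2 y z hyz
  -- The leading value is incompatible with any later value between itself and `L` (for `<`), or
  -- with any later smaller value (for `>`).
  rcases hR with hR' | hR'
  · refine ⟨⟨L, by omega⟩, le_rfl, key _ ?_⟩
    subst hR'
    intro j hj
    simp only [Fin.ext_iff]
    constructor
    · intro h
      by_contra hne
      have h3 := h ⟨j, by omega⟩
      rw [succAbove_val] at h3
      simp at h3
      omega
    · intro h x hx hlt
      omega
  · refine ⟨0, Nat.zero_le _, key _ ?_⟩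
    subst hR'
    intro j hj
    simp only [Fin.ext_iff]
    constructor
    · intro h
      by_contra hne
      have hpos : 0 < (j : ℕ) := Nat.pos_of_ne_zero hne
      have h3 := h ⟨0, by omega⟩
      rw [succAbove_val, if_pos hpos] at h3
      exact h3 (Nat.succ_pos L) hpos
    · intro h x hx hlt
      simp at h
      subst h
      simp at hlt

/-- The number of `R`-avoiders of length `n` that satisfy `MonoBelow R L`. -/
noncomputable def cnt (R : ℕ → ℕ → Prop) (n L : ℕ) : ℕ :=
  Nat.card {π : Perm (Fin n) // Av R π ∧ MonoBelow R L π}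

/-- Counting permutations according to their first entry. -/
theorem card_ins_zero {n : ℕ} (P : Perm (Fin (n + 1)) → Prop) :
    Nat.card {ρ // P ρ} = ∑ j : Fin (n + 1), Nat.card {e // P (ins 0 j e)} := by
  rw [← Nat.card_sigma]
  symm
  refine Nat.card_eq_of_bijective (fun x => ⟨ins 0 x.1 x.2.1, x.2.2⟩) ⟨?_, ?_⟩
  · rintro ⟨j, e, he⟩ ⟨j', e', he'⟩ h
    obtain ⟨rfl, rfl⟩ := ins_inj (congrArg Subtype.val h)
    rfl
  · rintro ⟨ρ, h⟩
    obtain ⟨e, he⟩ := exists_ins ρ 0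
    exact ⟨⟨ρ 0, e, he ▸ h⟩, Subtype.ext he.symm⟩

theorem cnt_succ_zero {R : ℕ → ℕ → Prop} (hR : R = (· < ·) ∨ R = (· > ·)) (n : ℕ) :
    cnt R (n + 1) 0 = ∑ j ∈ Finset.Ico 0 (n + 1), cnt R n j := by
  rw [← Finset.range_eq_Ico, Finset.sum_range, cnt, card_ins_zero]
  refine Finset.sum_congr rfl fun j _ => Nat.card_congr (Equiv.subtypeEquivRight fun e => ?_)
  rw [av_ins_zero hR]
  exact ⟨fun h => h.1, fun h => ⟨h, monoBelow_ins_of_le hR j e (Nat.zero_le _) h.2⟩⟩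

theorem cnt_succ_succ {R : ℕ → ℕ → Prop} (hR : R = (· < ·) ∨ R = (· > ·)) {n L : ℕ}
    (hL : L ≤ n) :
    cnt R (n + 1) (L + 1) = cnt R n L + ∑ j ∈ Finset.Ico (L + 1) (n + 1), cnt R n j := by
  classical
  obtain ⟨j₀, hj₀, h⟩ := monoBelow_ins_of_gt hR hL
  rw [cnt, card_ins_zero]
  have h1 : ∀ j : Fin (n + 1), Nat.card {e // Av R (ins 0 j e) ∧ MonoBelow R (L + 1) (ins 0 j e)} =
      (if j = j₀ then cnt R n L else 0) + if L + 1 ≤ (j : ℕ) then cnt R n j else 0 := by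
    intro j
    by_cases hj : L + 1 ≤ (j : ℕ)
    · rw [if_neg (by rintro rfl; omega), if_pos hj, zero_add]
      refine Nat.card_congr (Equiv.subtypeEquivRight fun e => ?_)
      rw [av_ins_zero hR]
      exact ⟨fun h => h.1, fun h => ⟨h, monoBelow_ins_of_le hR j e hj h.2⟩⟩
    · rw [if_neg hj, add_zero]
      have hj' : (j : ℕ) ≤ L := by omega
      split_ifs with hjj
      · refine Nat.card_congr (Equiv.subtypeEquivRight fun e => ?_)
        rw [av_ins_zero hR, h j e hj']
        exact ⟨fun h => ⟨h.1.1, h.2.2⟩, fun h => ⟨⟨h.1, h.2.mono hj'⟩, hjj, h.2⟩⟩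
      · rw [Nat.card_eq_zero]
        left
        refine ⟨fun e => hjj ((h j e.1 hj').1 e.2.2).1⟩
  rw [Finset.sum_congr rfl fun j _ => h1 j, Finset.sum_add_distrib, Finset.sum_ite_eq']
  simp only [Finset.mem_univ, if_true]
  congr 1
  rw [← Finset.sum_range (n := n + 1) (f := fun j => if L + 1 ≤ j then cnt R n j else 0),
    ← Finset.sum_filter]
  congr 1
  ext j
  simp; omega

/-- The counts are ballot numbers: `cnt R n L = C(2n - L, n) - C(2n - L, n + 1)`. -/
theorem cnt_ballot {R : ℕ → ℕ → Prop} (hR : R = (· < ·) ∨ R = (· > ·)) (n : ℕ) :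
    ∀ L ≤ n, cnt R n L + (2 * n - L).choose (n + 1) = (2 * n - L).choose n := by
  induction n with
  | zero =>
    intro L hL
    have : cnt R 0 L = 1 := by
      rw [cnt, Nat.card_eq_one_iff_unique]
      exact ⟨⟨fun a b => Subtype.ext (Subsingleton.elim _ _)⟩,
        ⟨1, fun x => x.elim0, fun x => x.elim0⟩⟩
    simp [this]
  | succ n ih =>
    have hs : ∀ L ≤ n + 1, ∑ j ∈ Finset.Ico L (n + 1), cnt R n j + (2 * n + 1 - L).choose (n + 2) =
        (2 * n + 1 - L).choose (n + 1) := by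
      intro L hL
      induction hL using Nat.decreasingInduction with
      | self =>
        rw [Finset.Ico_self, Finset.sum_empty, Nat.choose_eq_zero_of_lt (by omega),
          Nat.choose_eq_zero_of_lt (by omega)]
      | of_succ L hL ihL =>
        rw [Finset.sum_eq_sum_Ico_succ_bot hL]
        have h1 := ih L (by omega)
        obtain ⟨c, hc⟩ : ∃ c, 2 * n - L = c := ⟨_, rfl⟩
        rw [show 2 * n + 1 - (L + 1) = c by omega] at ihL
        rw [show 2 * n + 1 - L = c + 1 by omega, Nat.choose_succ_succ', Nat.choose_succ_succ' c n]
        rw [hc] at h1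
        have : n + 1 + 1 = n + 2 := rfl
        rw [this]
        omega
    intro L hL
    rcases L with _ | L
    · rw [cnt_succ_zero hR]
      have h0 := hs 0 (by omega)
      rw [show 2 * n + 1 - 0 = 2 * n + 1 from rfl] at h0
      rw [show 2 * (n + 1) - 0 = 2 * n + 1 + 1 from rfl, Nat.choose_succ_succ' _ (n + 1),
        Nat.choose_succ_succ' (2 * n + 1) n]
      have hsym := Nat.choose_symm_half n
      have : n + 1 + 1 = n + 2 := rfl
      rw [this]
      omega
    · rw [cnt_succ_succ hR (by omega)]
      have h0 := hs (L + 1) hL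
      have h1 := ih L (by omega)
      obtain ⟨c, hc⟩ : ∃ c, 2 * n - L = c := ⟨_, rfl⟩
      rw [show 2 * n + 1 - (L + 1) = c by omega] at h0
      rw [show 2 * (n + 1) - (L + 1) = c + 1 by omega, Nat.choose_succ_succ',
        Nat.choose_succ_succ' c n]
      rw [hc] at h1
      have : n + 1 + 1 = n + 2 := rfl
      rw [this]
      omega

theorem card_av {R : ℕ → ℕ → Prop} (hR : R = (· < ·) ∨ R = (· > ·)) (n : ℕ) :
    Nat.card {π : Perm (Fin n) // Av R π} = catalan n := by
  have h0 : Nat.card {π : Perm (Fin n) // Av R π} = cnt R n 0 :=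
    Nat.card_congr (Equiv.subtypeEquivRight fun e =>
      ⟨fun h => ⟨h, fun y z _ h1 => absurd h1 (Nat.not_lt_zero _)⟩, fun h => h.1⟩)
  have h1 := cnt_ballot hR n 0 (Nat.zero_le _)
  have h2 := Nat.choose_succ_right_eq (2 * n) n
  have h3 := succ_mul_catalan_eq_centralBinom n
  rw [Nat.centralBinom] at h3
  rw [h0]
  rw [Nat.sub_zero] at h1
  rw [show 2 * n - n = n by omega] at h2
  refine Nat.eq_of_mul_eq_mul_left (Nat.succ_pos n) ?_
  nlinarith

/-! ### Avoiders with a descent on the left, or among the two largest values -/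

/-- The two leftmost entries are decreasing (vacuous for length less than two). -/
def LeftDesc {n : ℕ} (π : Perm (Fin n)) : Prop :=
  ∀ i j : Fin n, (i : ℕ) = 0 → (j : ℕ) = 1 → π j < π i

/-- The largest value occurs to the left of the second largest one (vacuous for length less than
two). -/
def TopDesc {n : ℕ} (π : Perm (Fin n)) : Prop :=
  ∀ u v : Fin n, (u : ℕ) + 1 = n → (v : ℕ) + 2 = n → π⁻¹ u < π⁻¹ v

/-- The reverse-complement of the inverse of `π`. It is an involution that preserves avoidance of
`312` and of `321` and exchanges `TopDesc` and `LeftDesc`. -/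
def rci {n : ℕ} (π : Perm (Fin n)) : Perm (Fin n) := Fin.revPerm * π⁻¹ * Fin.revPerm

theorem rci_apply {n : ℕ} (π : Perm (Fin n)) (x : Fin n) : rci π x = (π⁻¹ x.rev).rev := rfl

theorem rci_rci {n : ℕ} (π : Perm (Fin n)) : rci (rci π) = π := by
  have h : (Fin.revPerm : Perm (Fin n))⁻¹ = Fin.revPerm := rfl
  have h2 : (Fin.revPerm : Perm (Fin n)) * Fin.revPerm = 1 := by
    ext x; simp
  simp only [rci, mul_inv_rev, h, inv_inv]
  calc _ = (Fin.revPerm * Fin.revPerm) * π * (Fin.revPerm * Fin.revPerm) := by group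
    _ = π := by rw [h2]; simp

theorem Av.rci {R : ℕ → ℕ → Prop} (hR : R = (· < ·) ∨ R = (· > ·)) {n : ℕ} {π : Perm (Fin n)}
    (h : Av R π) : Av R (rci π) := by
  intro x y z hxy hyz h1 h2 h3
  simp only [rci_apply] at h1 h2 h3
  have e : ∀ w : Fin n, π (π⁻¹ w.rev) = w.rev := fun w => by simp
  rw [Fin.rev_lt_rev] at h1 h2
  rcases hR with rfl | rfl
  · have h4 : π⁻¹ z.rev < π⁻¹ y.rev := by
      rw [← Fin.rev_lt_rev]; exact h3
    refine h (π⁻¹ x.rev) (π⁻¹ z.rev) (π⁻¹ y.rev) h2 h4 ?_ ?_ ?_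
    · rw [e, e, Fin.rev_lt_rev]; exact hxy.trans hyz
    · rw [e, e, Fin.rev_lt_rev]; exact hxy
    · rw [e, e]; exact Fin.rev_lt_rev.2 hyz
  · have h4 : π⁻¹ y.rev < π⁻¹ z.rev := by
      rw [← Fin.rev_lt_rev]; exact h3
    refine h (π⁻¹ x.rev) (π⁻¹ y.rev) (π⁻¹ z.rev) h1 h4 ?_ ?_ ?_
    · rw [e, e, Fin.rev_lt_rev]; exact hxy
    · rw [e, e, Fin.rev_lt_rev]; exact hxy.trans hyz
    · rw [e, e]; exact Fin.rev_lt_rev.2 hyz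

theorem leftDesc_rci {n : ℕ} (π : Perm (Fin n)) : LeftDesc (rci π) ↔ TopDesc π := by
  constructor
  · intro h u v hu hv
    have := h u.rev v.rev (by rw [Fin.val_rev]; omega) (by rw [Fin.val_rev]; omega)
    rw [rci_apply, rci_apply, Fin.rev_lt_rev, Fin.rev_rev, Fin.rev_rev] at this
    exact this
  · intro h i j hi hj
    rw [rci_apply, rci_apply, Fin.rev_lt_rev]
    exact h _ _ (by rw [Fin.val_rev]; omega) (by rw [Fin.val_rev]; omega)

theorem card_topDesc {R : ℕ → ℕ → Prop} (hR : R = (· < ·) ∨ R = (· > ·)) (n : ℕ) :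
    Nat.card {π : Perm (Fin n) // Av R π ∧ TopDesc π} =
      Nat.card {π : Perm (Fin n) // Av R π ∧ LeftDesc π} := by
  refine card_bij rci ?_ ?_ ?_
  · rintro π ⟨h1, h2⟩
    exact ⟨h1.rci hR, (leftDesc_rci π).2 h2⟩
  · intro π π' _ _ h
    rw [← rci_rci π, h, rci_rci]
  · rintro π ⟨h1, h2⟩
    refine ⟨rci π, ⟨h1.rci hR, ?_⟩, rci_rci π⟩
    rw [← leftDesc_rci, rci_rci]
    exact h2

/-- In an `R`-avoider that starts with a descent, the second entry is a function `v` of the first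
entry `a` of the permutation that remains after deleting the second one: `a` itself (the first entry
of the longer permutation then being `a + 1`) for `R = (· < ·)`, and `0` for `R = (· > ·)`. -/
theorem exists_second {R : ℕ → ℕ → Prop} (hR : R = (· < ·) ∨ R = (· > ·)) {m : ℕ} :
    ∃ v : Fin (m + 1) → Fin (m + 2), ∀ (a : Fin (m + 1)) (j : Fin (m + 2)),
      ((j : ℕ) ≤ a ∧ ∀ x : Fin (m + 1), x < a → ¬ R j (j.succAbove x)) ↔ j = v a := by
  rcases hR with rfl | rfl
  · refine ⟨fun a => a.castSucc, fun a j => ?_⟩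
    rw [Fin.ext_iff]
    constructor
    · rintro ⟨h1, h2⟩
      by_contra hne
      have hlt : (j : ℕ) < a := lt_of_le_of_ne h1 hne
      refine h2 ⟨j, by omega⟩ hlt ?_
      rw [succAbove_val]
      simp
    · intro h
      have h' : (j : ℕ) = a := h
      refine ⟨h'.le, fun x hx hlt => ?_⟩
      rw [succAbove_val, if_pos (by rw [h']; exact hx)] at hlt
      have : (x : ℕ) < a := hx
      omega
  · refine ⟨fun a => 0, fun a j => ?_⟩
    rw [Fin.ext_iff]
    constructor
    · rintro ⟨h1, h2⟩
      by_contra hne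
      have hpos : 0 < (j : ℕ) := Nat.pos_of_ne_zero hne
      refine h2 ⟨0, by omega⟩ (Fin.lt_def.2 (show 0 < (a : ℕ) by omega)) ?_
      rw [succAbove_val, if_pos hpos]
      exact hpos
    · intro h
      have h' : (j : ℕ) = 0 := h
      refine ⟨by omega, fun x _ hlt => ?_⟩
      rw [h'] at hlt
      exact Nat.not_lt_zero _ hlt

theorem leftDesc_ins_one {m : ℕ} (j : Fin (m + 2)) (e : Perm (Fin (m + 1))) :
    LeftDesc (ins 1 j e) ↔ (j : ℕ) ≤ e 0 := by
  have h0 : ins 1 j e 0 = j.succAbove (e 0) := by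
    rw [← ins_succAbove 1 j e 0]; simp
  have h1 : LeftDesc (ins 1 j e) ↔ ins 1 j e 1 < ins 1 j e 0 := by
    constructor
    · intro h; exact h 0 1 rfl rfl
    · intro h i k hi hk
      have hi' : i = 0 := Fin.ext hi
      have hk' : k = 1 := Fin.ext hk
      rwa [hi', hk']
  rw [h1, ins_self, h0, Fin.lt_def, succAbove_val]
  split_ifs <;> omega

/-- Inserting a value `j` below the first entry at the second position: a new pattern led by `j`
would also be led by the first entry, so only patterns with `j` in the middle matter. -/
theorem av_ins_one {R : ℕ → ℕ → Prop} (hR : R = (· < ·) ∨ R = (· > ·)) {m : ℕ}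
    (j : Fin (m + 2)) (e : Perm (Fin (m + 1))) (hj : (j : ℕ) ≤ e 0) :
    Av R (ins 1 j e) ↔ Av R e ∧ ∀ x : Fin (m + 1), x < e 0 → ¬ R j (j.succAbove x) := by
  have h00 : (0 : Fin (m + 2)) = Fin.succAbove 1 0 := by simp
  have hlt1 : ∀ x : Fin (m + 1), x ≠ 0 → 1 < Fin.succAbove (1 : Fin (m + 2)) x := by
    intro x hx
    have : (x : ℕ) ≠ 0 := fun h => hx (Fin.ext h)
    rw [Fin.lt_def, succAbove_val, Fin.val_one, if_neg (by omega)]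
    omega
  have hlt1' : ∀ x : Fin (m + 1), 1 < Fin.succAbove (1 : Fin (m + 2)) x → 0 < x := by
    rintro x hx
    rcases eq_or_ne x 0 with rfl | h
    · rw [← h00] at hx; exact absurd hx (by simp)
    · exact Fin.pos_of_ne_zero h
  have hlt0 : ∀ x : Fin (m + 1), Fin.succAbove (1 : Fin (m + 2)) x < 1 → x = 0 := by
    intro x hx
    by_contra h
    exact absurd hx (hlt1 x h).not_gt
  constructor
  · intro h
    constructor
    · intro x y z hxy hyz h1 h2
      have := h (Fin.succAbove 1 x) (Fin.succAbove 1 y) (Fin.succAbove 1 z)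
      simp only [ins_succAbove, Fin.succAbove_lt_succAbove_iff, R_succAbove hR] at this
      exact this hxy hyz h1 h2
    · intro x hx
      have hne : e.symm x ≠ 0 := by
        rintro h0
        rw [Equiv.symm_apply_eq] at h0
        exact hx.ne h0
      have := h (Fin.succAbove 1 0) 1 (Fin.succAbove 1 (e.symm x)) (by rw [← h00]; simp)
        (hlt1 _ hne)
      simp only [ins_self, ins_succAbove, Fin.succAbove_lt_succAbove_iff,
        Equiv.apply_symm_apply] at this
      refine this ?_ hx
      rw [Fin.lt_def, succAbove_val]
      split_ifs <;> omega
  · rintro ⟨h1, h2⟩ x y z hxy hyz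
    rcases Fin.eq_self_or_eq_succAbove 1 z with rfl | ⟨z, rfl⟩
    · have h3 : (y : ℕ) < 1 := hyz
      have h4 : (x : ℕ) < y := hxy
      omega
    rcases Fin.eq_self_or_eq_succAbove 1 y with rfl | ⟨y, rfl⟩
    · rcases Fin.eq_self_or_eq_succAbove 1 x with rfl | ⟨x, rfl⟩
      · exact absurd hxy (lt_irrefl _)
      obtain rfl := hlt0 x hxy
      simp only [ins_self, ins_succAbove, Fin.succAbove_lt_succAbove_iff]
      exact fun _ => h2 _
    rcases Fin.eq_self_or_eq_succAbove 1 x with rfl | ⟨x, rfl⟩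
    · simp only [ins_self, ins_succAbove, Fin.succAbove_lt_succAbove_iff, R_succAbove hR,
        succAbove_lt_iff] at hyz ⊢
      intro h3 h4
      exact h1 0 y z (hlt1' y hxy) hyz (h3.trans_le hj) (h4.trans_le hj)
    · simp only [ins_succAbove, Fin.succAbove_lt_succAbove_iff, R_succAbove hR] at hxy hyz ⊢
      exact h1 x y z hxy hyz

theorem topDesc_iff {m : ℕ} (π : Perm (Fin (m + 2))) :
    TopDesc π ↔ ∀ x y, (π x : ℕ) = m + 1 → (π y : ℕ) = m → x < y := by
  constructor
  · intro h x y hx hy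
    have := h (π x) (π y) (by omega) (by omega)
    simpa using this
  · intro h u v hu hv
    refine h _ _ ?_ ?_
    · simp; omega
    · simp; omega

/-- For length at least two, inserting an entry below the first one at the second position does not
affect whether the two largest values form a descent. If the inserted entry becomes itself the
second largest value, the first entry is the largest one both before and after. -/
theorem topDesc_ins_one {m : ℕ} (j : Fin (m + 3)) (e : Perm (Fin (m + 2)))
    (hj : (j : ℕ) ≤ e 0) : TopDesc (ins 1 j e) ↔ TopDesc e := by
  rw [topDesc_iff, topDesc_iff]
  have he0 := (e 0).isLt
  constructor
  · intro h x y hx hy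
    rcases lt_or_eq_of_le (show (j : ℕ) ≤ m + 1 by omega) with hlt | heq
    · have := h (Fin.succAbove 1 x) (Fin.succAbove 1 y)
      simp only [ins_succAbove, Fin.succAbove_lt_succAbove_iff, succAbove_val] at this
      refine this ?_ ?_ <;> split_ifs <;> omega
    · have hx0 : x = 0 := e.injective (Fin.ext (by omega))
      subst hx0
      refine Fin.pos_of_ne_zero ?_
      rintro rfl
      omega
  · intro h x y hx hy
    rcases lt_or_eq_of_le (show (j : ℕ) ≤ m + 1 by omega) with hlt | heq
    · rcases Fin.eq_self_or_eq_succAbove 1 x with rfl | ⟨x, rfl⟩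
      · rw [ins_self] at hx; omega
      rcases Fin.eq_self_or_eq_succAbove 1 y with rfl | ⟨y, rfl⟩
      · rw [ins_self] at hy; omega
      simp only [ins_succAbove, Fin.succAbove_lt_succAbove_iff, succAbove_val] at hx hy ⊢
      refine h x y ?_ ?_
      · split_ifs at hx <;> omega
      · split_ifs at hy <;> omega
    · have hy1 : y = 1 := (ins 1 j e).injective (Fin.ext (by rw [ins_self]; omega))
      have hx0 : x = 0 := by
        refine (ins 1 j e).injective (Fin.ext ?_)
        have h00 : (0 : Fin (m + 3)) = Fin.succAbove 1 0 := by simp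
        rw [hx, h00, ins_succAbove, succAbove_val]
        split_ifs <;> omega
      rw [hy1, hx0]
      simp

/-- Deleting the second entry is a bijection from the `R`-avoiders of length `m + 2` with an initial
descent onto the `R`-avoiders of length `m + 1`; `P` and `Q` are corresponding side conditions. -/
theorem card_leftDesc_aux {R : ℕ → ℕ → Prop} (hR : R = (· < ·) ∨ R = (· > ·)) (m : ℕ)
    (P : Perm (Fin (m + 2)) → Prop) (Q : Perm (Fin (m + 1)) → Prop)
    (hPQ : ∀ (j : Fin (m + 2)) (e : Perm (Fin (m + 1))), (j : ℕ) ≤ e 0 → (P (ins 1 j e) ↔ Q e)) :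
    Nat.card {π : Perm (Fin (m + 2)) // Av R π ∧ LeftDesc π ∧ P π} =
      Nat.card {π : Perm (Fin (m + 1)) // Av R π ∧ Q π} := by
  obtain ⟨v, hv⟩ := exists_second hR (m := m)
  symm
  refine card_bij (fun e => ins 1 (v (e 0)) e) ?_ ?_ ?_
  · rintro e ⟨he, hq⟩
    obtain ⟨h1, h2⟩ := (hv (e 0) _).2 rfl
    exact ⟨(av_ins_one hR _ e h1).2 ⟨he, h2⟩, (leftDesc_ins_one _ e).2 h1, (hPQ _ e h1).2 hq⟩
  · intro e e' _ _ h
    exact (ins_inj h).2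
  · rintro ρ ⟨h1, h2, h3⟩
    obtain ⟨e, he⟩ := exists_ins ρ 1
    rw [he] at h1 h2 h3
    rw [leftDesc_ins_one] at h2
    rw [av_ins_one hR _ e h2] at h1
    refine ⟨e, ⟨h1.1, (hPQ _ e h2).1 h3⟩, ?_⟩
    rw [← (hv (e 0) _).1 ⟨h2, h1.2⟩]
    exact he.symm

theorem card_av_leftDesc {R : ℕ → ℕ → Prop} (hR : R = (· < ·) ∨ R = (· > ·)) (m : ℕ) :
    Nat.card {π : Perm (Fin (m + 2)) // Av R π ∧ LeftDesc π} = catalan (m + 1) := by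
  rw [← card_av hR]
  have := card_leftDesc_aux hR m (fun _ => True) (fun _ => True) (fun _ _ _ => Iff.rfl)
  simpa only [and_true] using this

theorem card_av_topDesc {R : ℕ → ℕ → Prop} (hR : R = (· < ·) ∨ R = (· > ·)) (m : ℕ) :
    Nat.card {π : Perm (Fin (m + 2)) // Av R π ∧ TopDesc π} = catalan (m + 1) := by
  rw [card_topDesc hR, card_av_leftDesc hR]

theorem card_av_leftDesc_topDesc {R : ℕ → ℕ → Prop} (hR : R = (· < ·) ∨ R = (· > ·)) (m : ℕ) :
    Nat.card {π : Perm (Fin (m + 3)) // Av R π ∧ LeftDesc π ∧ TopDesc π} = catalan (m + 1) := by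
  rw [card_leftDesc_aux hR (m + 1) TopDesc TopDesc topDesc_ins_one, card_av_topDesc hR]

/-! ### Gluing a permutation of the left columns to one of the upper rows -/

theorem exists_viaEmbedding {α β : Type*} [Finite α] (ι : α ↪ β) (θ : Perm β)
    (h : ∀ y, y ∉ Set.range ι → θ y = y) : ∃ τ : Perm α, τ.viaEmbedding ι = θ := by
  have h1 : ∀ x, ∃ y, ι y = θ (ι x) := by
    intro x
    by_contra hx
    have h2 := θ.injective (h _ hx)
    exact hx ⟨x, h2.symm⟩
  choose f hf using h1
  have hinj : Function.Injective f := fun x y hxy => by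
    have : θ (ι x) = θ (ι y) := by rw [← hf, ← hf, hxy]
    exact ι.injective (θ.injective this)
  refine ⟨Equiv.ofBijective f (Finite.injective_iff_bijective.1 hinj), Equiv.ext fun y => ?_⟩
  by_cases hy : y ∈ Set.range ι
  · obtain ⟨x, rfl⟩ := hy
    rw [Perm.viaEmbedding_apply, ← hf]; rfl
  · rw [Perm.viaEmbedding_apply_of_notMem _ _ _ hy, h y hy]

/-- For `312` and `321`, containment in a Young diagram amounts to three entries as in `Av`, together
with the condition that the last column meets all three rows inside the diagram. -/
theorem containsIn_iff {n : ℕ} (b : Fin n → ℕ) (π : Perm (Fin n)) {σ : Perm (Fin 3)}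
    {R : ℕ → ℕ → Prop} (hσ : (σ = p312 ∧ R = (· < ·)) ∨ (σ = p321 ∧ R = (· > ·))) :
    ContainsIn b π σ ↔ ∃ x y z : Fin n, x < y ∧ y < z ∧ π y < π x ∧ π z < π x ∧
      R (π y) (π z) ∧ (z : ℕ) + 1 ≤ b (π x) ∧ (z : ℕ) + 1 ≤ b (π y) ∧ (z : ℕ) + 1 ≤ b (π z) := by
  constructor
  · rintro ⟨f, hf, h1, h2⟩
    refine ⟨f 0, f 1, f 2, hf (by decide), hf (by decide), ?_⟩
    rcases hσ with ⟨rfl, rfl⟩ | ⟨rfl, rfl⟩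
    · exact ⟨(h1 1 0).1 (by decide), (h1 2 0).1 (by decide), (h1 1 2).1 (by decide),
        h2 2 0, h2 2 1, h2 2 2⟩
    · exact ⟨(h1 1 0).1 (by decide), (h1 2 0).1 (by decide), (h1 2 1).1 (by decide),
        h2 2 0, h2 2 1, h2 2 2⟩
  · rintro ⟨x, y, z, hxy, hyz, h1, h2, h3, h4, h5, h6⟩
    have hxy' : (x : ℕ) < y := hxy
    have hyz' : (y : ℕ) < z := hyz
    refine ⟨![x, y, z], ?_, ?_, ?_⟩
    · intro s t hst
      fin_cases s <;> fin_cases t <;> simp at hst ⊢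
      · exact hxy
      · exact hxy.trans hyz
      · exact hyz
    · rcases hσ with ⟨rfl, rfl⟩ | ⟨rfl, rfl⟩
      · have h3' : π y < π z := h3
        intro s t
        fin_cases s <;> fin_cases t <;> simp [p312, h1, h2, h3', h1.le, h2.le, h3'.le]
      · have h3' : π z < π y := h3
        intro s t
        fin_cases s <;> fin_cases t <;> simp [p321, h1, h2, h3', h1.le, h2.le, h3'.le]
    · intro s t
      fin_cases s <;> fin_cases t <;> simp <;> omega

section Gluing

variable {n k r : ℕ} (hn : n = k + (r + 3))

/-- The inclusion of the first `k + 2` indices. -/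
def loE : Fin (k + 2) ↪ Fin n := Fin.castLEEmb (by omega)

/-- The inclusion of the last `n - k = r + 3` indices. -/
def hiE : Fin (r + 3) ↪ Fin n :=
  ⟨fun s => ⟨k + s, by omega⟩, fun s t h => Fin.ext (by simpa using congrArg Fin.val h)⟩

theorem loE_val (i : Fin (k + 2)) : (loE hn i : ℕ) = i := rfl

theorem hiE_val (s : Fin (r + 3)) : (hiE hn s : ℕ) = k + s := rfl

/-- `ρ` permutes the lowest `k + 2` indices, then `τ` permutes those from `k` on. The dots in the
columns `i < k + 2` with `ρ i < k` stay at height `ρ i`; the two others, at the heights `k` and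
`k + 1` of `ρ`, are moved to the heights `k + τ 0` and `k + τ 1`. -/
noncomputable def glue (ρ : Perm (Fin (k + 2))) (τ : Perm (Fin (r + 3))) : Perm (Fin n) :=
  τ.viaEmbedding (hiE hn) * ρ.viaEmbedding (loE hn)

theorem lo_fix (ρ : Perm (Fin (k + 2))) {i : Fin n} (hi : k + 2 ≤ i) :
    ρ.viaEmbedding (loE hn) i = i := by
  refine Perm.viaEmbedding_apply_of_notMem _ _ _ ?_
  rintro ⟨x, rfl⟩
  rw [loE_val] at hi
  omega

theorem hi_fix (τ : Perm (Fin (r + 3))) {i : Fin n} (hi : (i : ℕ) < k) :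
    τ.viaEmbedding (hiE hn) i = i := by
  refine Perm.viaEmbedding_apply_of_notMem _ _ _ ?_
  rintro ⟨x, rfl⟩
  rw [hiE_val] at hi
  omega

theorem exists_loE {i : Fin n} (hi : (i : ℕ) < k + 2) : ∃ x, loE hn x = i := ⟨⟨i, hi⟩, rfl⟩

theorem exists_hiE {i : Fin n} (hi : k ≤ (i : ℕ)) : ∃ x, hiE hn x = i :=
  ⟨⟨i - k, by omega⟩, Fin.ext (by rw [hiE_val]; simp; omega)⟩

theorem glue_low (ρ : Perm (Fin (k + 2))) (τ : Perm (Fin (r + 3))) {i : Fin (k + 2)}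
    (hi : (ρ i : ℕ) < k) : (glue hn ρ τ (loE hn i) : ℕ) = ρ i := by
  rw [glue, Perm.mul_apply, Perm.viaEmbedding_apply, hi_fix hn τ (by rw [loE_val]; exact hi),
    loE_val]

theorem glue_high (ρ : Perm (Fin (k + 2))) (τ : Perm (Fin (r + 3))) {i : Fin (k + 2)}
    {s : Fin (r + 3)} (hi : (ρ i : ℕ) = k + s) :
    glue hn ρ τ (loE hn i) = hiE hn (τ s) := by
  have : loE hn (ρ i) = hiE hn s := Fin.ext hi
  rw [glue, Perm.mul_apply, Perm.viaEmbedding_apply, this, Perm.viaEmbedding_apply]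

/-- If `τ` starts with an ascent, `ρ` is the standardization of the first `k + 2` columns of
`glue hn ρ τ`. -/
theorem glue_lt_iff (ρ : Perm (Fin (k + 2))) {τ : Perm (Fin (r + 3))} (hτ : τ 0 < τ 1)
    (i j : Fin (k + 2)) :
    glue hn ρ τ (loE hn i) < glue hn ρ τ (loE hn j) ↔ ρ i < ρ j := by
  have hval : ∀ i, (∃ s : Fin 2, (ρ i : ℕ) = k + s ∧
      (glue hn ρ τ (loE hn i) : ℕ) = k + τ (Fin.castLE (by omega) s)) ∨
      (ρ i : ℕ) < k ∧ (glue hn ρ τ (loE hn i) : ℕ) = ρ i := by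
    intro i
    by_cases h : (ρ i : ℕ) < k
    · exact Or.inr ⟨h, glue_low hn ρ τ h⟩
    · left
      refine ⟨⟨ρ i - k, by omega⟩, by simp; omega, ?_⟩
      rw [glue_high hn ρ τ (s := Fin.castLE (by omega) (⟨ρ i - k, by omega⟩ : Fin 2))
        (by simp; omega), hiE_val]
  have hτ' : (τ 0 : ℕ) < τ 1 := hτ
  have c0 : Fin.castLE (by omega : 2 ≤ r + 3) (0 : Fin 2) = 0 := rfl
  have c1 : Fin.castLE (by omega : 2 ≤ r + 3) (1 : Fin 2) = 1 := rfl
  rw [Fin.lt_def, Fin.lt_def]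
  rcases hval i with ⟨s, h1, h2⟩ | ⟨h1, h2⟩ <;> rcases hval j with ⟨t, h3, h4⟩ | ⟨h3, h4⟩ <;>
    rw [h2, h4] <;> try omega
  rw [h1, h3]
  have hs : s = 0 ∨ s = 1 := by omega
  have ht : t = 0 ∨ t = 1 := by omega
  rcases hs with rfl | rfl <;> rcases ht with rfl | rfl <;> simp only [c0, c1] <;> simp <;>
    omega

/-- The two blocks of indices overlap in `k` and `k + 1`. -/
theorem lo_swap :
    (swap (⟨k, by omega⟩ : Fin (k + 2)) ⟨k + 1, by omega⟩).viaEmbedding (loE hn) =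
      (swap (0 : Fin (r + 3)) 1).viaEmbedding (hiE hn) := by
  have key : ∀ {α : Type} (ι : α ↪ Fin n) [DecidableEq α] (x y : α),
      (swap x y).viaEmbedding ι = swap (ι x) (ι y) := by
    intro α ι _ x y
    refine Equiv.ext fun z => ?_
    by_cases hz : z ∈ Set.range ι
    · obtain ⟨w, rfl⟩ := hz
      rw [Perm.viaEmbedding_apply, ι.injective.swap_apply]
    · rw [Perm.viaEmbedding_apply_of_notMem _ _ _ hz, swap_apply_of_ne_of_ne]
      · rintro rfl; exact hz ⟨x, rfl⟩
      · rintro rfl; exact hz ⟨y, rfl⟩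
  rw [key, key]
  rfl

theorem via_mul {α β : Type*} (ι : α ↪ β) (p q : Perm α) :
    (p * q).viaEmbedding ι = p.viaEmbedding ι * q.viaEmbedding ι :=
  (Perm.viaEmbeddingHom ι).map_mul p q

/-- Every permutation whose lowest `k` dots lie in the first `k + 2` columns is obtained by
gluing. -/
theorem exists_glue (π : Perm (Fin n)) (h : ∀ i, (π i : ℕ) < k → (i : ℕ) < k + 2) :
    ∃ ρ τ, τ 0 < τ 1 ∧ glue hn ρ τ = π := by
  classical
  have h' : ∀ y : Fin (k + 2), (y : ℕ) < k → (π⁻¹ (loE hn y) : ℕ) < k + 2 := fun y hy =>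
    h _ (by simpa [loE_val] using hy)
  let e : {i : Fin (k + 2) // (π (loE hn i) : ℕ) < k} ≃ {y : Fin (k + 2) // (y : ℕ) < k} :=
    { toFun := fun i => ⟨⟨π (loE hn i.1), by have := i.2; omega⟩, i.2⟩
      invFun := fun y => ⟨⟨π⁻¹ (loE hn y.1), h' y.1 y.2⟩, by
        have : loE hn ⟨π⁻¹ (loE hn y.1), h' y.1 y.2⟩ = π⁻¹ (loE hn y.1) := rfl
        rw [this]; simpa [loE_val] using y.2⟩
      left_inv := fun i => Subtype.ext (Fin.ext (by
        have : loE hn ⟨π (loE hn i.1), by have := i.2; omega⟩ = π (loE hn i.1) := rfl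
        simp [this, loE_val]))
      right_inv := fun y => Subtype.ext (Fin.ext (by
        have : loE hn ⟨π⁻¹ (loE hn y.1), h' y.1 y.2⟩ = π⁻¹ (loE hn y.1) := rfl
        show (π (loE hn ⟨π⁻¹ (loE hn y.1), h' y.1 y.2⟩) : ℕ) = y.1
        rw [this]; simp [loE_val])) }
  -- `ρ₀` agrees with `π` at the low dots and places the two remaining columns arbitrarily; the case
  -- split at the end corrects their order.
  let ρ₀ : Perm (Fin (k + 2)) := e.extendSubtype
  have hρ₀ : ∀ i, (π (loE hn i) : ℕ) < k → loE hn (ρ₀ i) = π (loE hn i) := by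
    intro i hi
    have := e.extendSubtype_apply_of_mem i hi
    show loE hn (e.extendSubtype i) = _
    rw [this]
    rfl
  obtain ⟨τ₀, hτ₀⟩ := exists_viaEmbedding (hiE hn) (π * (ρ₀.viaEmbedding (loE hn))⁻¹) (by
    intro y hy
    have hyk : (y : ℕ) < k := by
      by_contra hc
      exact hy (exists_hiE hn (by omega))
    obtain ⟨i, hi⟩ := exists_loE hn (h (π⁻¹ y) (by simpa using hyk))
    have h1 : π (loE hn i) = y := by rw [hi]; simp
    have h2 := hρ₀ i (by rw [h1]; exact hyk)
    rw [Perm.mul_apply]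
    have h3 : (ρ₀.viaEmbedding (loE hn))⁻¹ y = loE hn i := by
      rw [Perm.inv_eq_iff_eq, Perm.viaEmbedding_apply, h2, h1]
    rw [h3, h1])
  have hg : glue hn ρ₀ τ₀ = π := by rw [glue, hτ₀]; simp
  rcases lt_or_ge (τ₀ 0) (τ₀ 1) with hlt | hge
  · exact ⟨ρ₀, τ₀, hlt, hg⟩
  · refine ⟨swap ⟨k, by omega⟩ ⟨k + 1, by omega⟩ * ρ₀, τ₀ * swap 0 1, ?_, ?_⟩
    · simp only [Perm.mul_apply, swap_apply_left, swap_apply_right]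
      refine lt_of_le_of_ne hge fun h => ?_
      have := τ₀.injective h
      simp at this
    · rw [← hg, glue, glue, via_mul, via_mul, lo_swap hn, mul_assoc,
        ← mul_assoc (Perm.viaEmbedding (swap 0 1) (hiE hn)), ← via_mul, swap_mul_self]
      congr 1
      rw [show Perm.viaEmbedding 1 (hiE hn) = 1 from (Perm.viaEmbeddingHom (hiE hn)).map_one,
        one_mul]

open Classical in
/-- The swap of the two leftmost columns if the two largest values of `ρ` form a descent, and the
identity otherwise. -/
noncomputable def orient (ρ : Perm (Fin (k + 2))) : Perm (Fin (r + 3)) :=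
  if TopDesc ρ then swap 0 1 else 1

/-- The permutation of `Fin n` whose first `k + 2` columns standardize to `ρ` and whose rows from
`k` on standardize to `τ`, for `ρ` and `τ` that agree on the order of the two dots they share. -/
noncomputable def comb (ρ : Perm (Fin (k + 2))) (τ : Perm (Fin (r + 3))) : Perm (Fin n) :=
  glue hn ρ (τ * orient ρ)

theorem leftDesc_iff (τ : Perm (Fin (r + 3))) : LeftDesc τ ↔ τ 1 < τ 0 := by
  constructor
  · intro h; exact h 0 1 rfl rfl
  · intro h i k hi hk
    have hi' : i = 0 := Fin.ext hi
    have hk' : k = 1 := Fin.ext hk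
    rwa [hi', hk']

theorem not_leftDesc_iff (τ : Perm (Fin (r + 3))) : ¬ LeftDesc τ ↔ τ 0 < τ 1 := by
  rw [leftDesc_iff, not_lt]
  refine ⟨fun h => lt_of_le_of_ne h fun h => ?_, le_of_lt⟩
  have := τ.injective h
  simp at this

theorem orient_asc_iff (ρ : Perm (Fin (k + 2))) (τ : Perm (Fin (r + 3))) :
    (τ * orient ρ : Perm (Fin (r + 3))) 0 < (τ * orient ρ : Perm (Fin (r + 3))) 1 ↔
      (TopDesc ρ ↔ LeftDesc τ) := by
  by_cases h : TopDesc ρ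
  · simp [orient, h, leftDesc_iff]
  · simp [orient, h, not_leftDesc_iff]

/-- The first `k + 2` columns of `comb hn ρ τ` are in the same relative order as `ρ`. -/
theorem comb_lt_iff {ρ : Perm (Fin (k + 2))} {τ : Perm (Fin (r + 3))}
    (h : TopDesc ρ ↔ LeftDesc τ) (i j : Fin (k + 2)) :
    comb hn ρ τ (loE hn i) < comb hn ρ τ (loE hn j) ↔ ρ i < ρ j :=
  glue_lt_iff hn ρ ((orient_asc_iff ρ τ).2 h) i j

theorem exists_comb (π : Perm (Fin n)) (h : ∀ i, (π i : ℕ) < k → (i : ℕ) < k + 2) :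
    ∃ ρ τ, (TopDesc ρ ↔ LeftDesc τ) ∧ comb hn ρ τ = π := by
  obtain ⟨ρ, τ, h1, h2⟩ := exists_glue hn π h
  refine ⟨ρ, τ * (orient ρ)⁻¹, ?_, ?_⟩
  · rw [← orient_asc_iff]; simpa using h1
  · rw [comb]; simpa using h2

theorem comb_inj {ρ ρ' : Perm (Fin (k + 2))} {τ τ' : Perm (Fin (r + 3))}
    (h : TopDesc ρ ↔ LeftDesc τ) (h' : TopDesc ρ' ↔ LeftDesc τ')
    (heq : comb hn ρ τ = comb hn ρ' τ') : ρ = ρ' ∧ τ = τ' := by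
  have hρ : ρ = ρ' := by
    have hm : StrictMono (ρ' * ρ⁻¹) := by
      intro x y hxy
      have h1 := comb_lt_iff hn h (ρ⁻¹ x) (ρ⁻¹ y)
      have h2 := comb_lt_iff hn h' (ρ⁻¹ x) (ρ⁻¹ y)
      rw [heq, h2] at h1
      exact h1.2 (by simpa using hxy)
    -- Both standardize the same word, so `ρ' * ρ⁻¹` is an order automorphism of a finite chain.
    let o : Fin (k + 2) ≃o Fin (k + 2) := StrictMono.orderIsoOfSurjective _ hm (Equiv.surjective _)
    have ho : o = OrderIso.refl _ := Subsingleton.elim _ _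
    have h3 : ρ' * ρ⁻¹ = 1 := Equiv.ext fun x => by
      have : o x = x := by rw [ho]; rfl
      exact this
    exact (mul_inv_eq_one.1 h3).symm
  subst hρ
  refine ⟨rfl, ?_⟩
  rw [comb, comb, glue, glue] at heq
  have h1 := mul_right_cancel heq
  have h2 := Perm.viaEmbeddingHom_injective (hiE hn) h1
  exact mul_right_cancel h2

/-- The column of `comb hn ρ τ` that corresponds to the column `s` of `τ`; it does not depend on
`τ`. -/
noncomputable def col (ρ : Perm (Fin (k + 2))) (s : Fin (r + 3)) : Fin n :=
  (ρ.viaEmbedding (loE hn))⁻¹ (hiE hn ((orient ρ)⁻¹ s))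

theorem comb_col (ρ : Perm (Fin (k + 2))) (τ : Perm (Fin (r + 3))) (s : Fin (r + 3)) :
    comb hn ρ τ (col hn ρ s) = hiE hn (τ s) := by
  simp [comb, glue, col, Perm.viaEmbedding_apply]

theorem orient_inv_of_two_le (ρ : Perm (Fin (k + 2))) {s : Fin (r + 3)} (hs : 2 ≤ (s : ℕ)) :
    (orient ρ)⁻¹ s = s := by
  unfold orient
  split_ifs
  · rw [swap_inv, swap_apply_of_ne_of_ne]
    · rintro rfl; simp at hs
    · rintro rfl; simp at hs
  · rfl

theorem col_of_two_le (ρ : Perm (Fin (k + 2))) {s : Fin (r + 3)} (hs : 2 ≤ (s : ℕ)) :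
    (col hn ρ s : ℕ) = k + s := by
  have : col hn ρ s = hiE hn s := by
    rw [col, orient_inv_of_two_le ρ hs, Perm.inv_eq_iff_eq, lo_fix]
    rw [hiE_val]; omega
  rw [this, hiE_val]

theorem lo_inv_apply (ρ : Perm (Fin (k + 2))) (x : Fin (k + 2)) :
    (ρ.viaEmbedding (loE hn))⁻¹ (loE hn x) = loE hn (ρ⁻¹ x) := by
  rw [Perm.inv_eq_iff_eq, Perm.viaEmbedding_apply]; simp

theorem col_zero_lt_one (ρ : Perm (Fin (k + 2))) :
    col hn ρ 0 < col hn ρ 1 ∧ (col hn ρ 1 : ℕ) < k + 2 := by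
  have e0 : hiE hn 0 = loE hn ⟨k, by omega⟩ := rfl
  have e1 : hiE hn 1 = loE hn ⟨k + 1, by omega⟩ := rfl
  by_cases h : TopDesc ρ
  · have h1 := h ⟨k + 1, by omega⟩ ⟨k, by omega⟩ rfl rfl
    simp only [col, orient, h, if_true, swap_inv, swap_apply_left, swap_apply_right]
    rw [e0, e1, lo_inv_apply, lo_inv_apply]
    exact ⟨h1, by rw [loE_val]; omega⟩
  · have h1 : ρ⁻¹ ⟨k, by omega⟩ < ρ⁻¹ ⟨k + 1, by omega⟩ := by
      by_contra hc
      refine h fun u v hu hv => ?_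
      have hu' : u = ⟨k + 1, by omega⟩ := Fin.ext (by simp; omega)
      have hv' : v = ⟨k, by omega⟩ := Fin.ext (by simp; omega)
      rw [hu', hv']
      refine lt_of_le_of_ne (not_lt.1 hc) fun h => ?_
      have := ρ⁻¹.injective h
      simp at this
    simp only [col, orient, h, if_false, inv_one, Perm.one_apply]
    rw [e0, e1, lo_inv_apply, lo_inv_apply]
    exact ⟨h1, by rw [loE_val]; omega⟩

theorem fin_cases3 (s : Fin (r + 3)) : s = 0 ∨ s = 1 ∨ 2 ≤ (s : ℕ) := by
  simp only [Fin.ext_iff, Fin.val_zero, Fin.val_one]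
  omega

theorem col_lt_of_lt_two (ρ : Perm (Fin (k + 2))) {s : Fin (r + 3)} (hs : (s : ℕ) < 2) :
    (col hn ρ s : ℕ) < k + 2 := by
  obtain ⟨h1, h2⟩ := col_zero_lt_one hn ρ (r := r)
  have h1' : (col hn ρ 0 : ℕ) < col hn ρ 1 := h1
  rcases fin_cases3 s with rfl | rfl | h
  · omega
  · omega
  · omega

theorem col_strictMono (ρ : Perm (Fin (k + 2))) : StrictMono (col hn ρ (r := r)) := by
  intro s t hst
  have hst' : (s : ℕ) < t := hst
  by_cases ht : 2 ≤ (t : ℕ)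
  · rw [Fin.lt_def, col_of_two_le hn ρ ht]
    by_cases hs : 2 ≤ (s : ℕ)
    · rw [col_of_two_le hn ρ hs]; omega
    · have := col_lt_of_lt_two hn ρ (s := s) (by omega); omega
  · have hs0 : s = 0 := Fin.ext (show (s : ℕ) = 0 by omega)
    have ht1 : t = 1 := Fin.ext (show (t : ℕ) = 1 by omega)
    rw [hs0, ht1]
    exact (col_zero_lt_one hn ρ).1

theorem exists_col (ρ : Perm (Fin (k + 2))) (τ : Perm (Fin (r + 3))) {i : Fin n}
    (hi : k ≤ (comb hn ρ τ i : ℕ)) : ∃ s, col hn ρ s = i := by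
  obtain ⟨s, hs⟩ := exists_hiE hn hi
  refine ⟨τ⁻¹ s, (comb hn ρ τ).injective ?_⟩
  rw [comb_col, ← hs]; simp

theorem comb_low (ρ : Perm (Fin (k + 2))) (τ : Perm (Fin (r + 3))) {i : Fin n}
    (hi : (comb hn ρ τ i : ℕ) < k) : (i : ℕ) < k + 2 := by
  by_contra hc
  rw [comb, glue, Perm.mul_apply, lo_fix hn ρ (by omega)] at hi
  obtain ⟨s, rfl⟩ := exists_hiE hn (i := i) (by omega)
  rw [Perm.viaEmbedding_apply, hiE_val] at hi
  omega

theorem isTransversal_comb {b : Fin n → ℕ} {b' : Fin (r + 3) → ℕ}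
    (hlo : ∀ t : Fin n, k + 2 ≤ b t) (hb' : ∀ s, b (hiE hn s) = k + b' s)
    (hb3 : ∀ s, 3 ≤ b' s) (ρ : Perm (Fin (k + 2))) (τ : Perm (Fin (r + 3))) :
    IsTransversal b (comb hn ρ τ) ↔ IsTransversal b' τ := by
  constructor
  · intro h s
    by_cases hs : 2 ≤ (s : ℕ)
    · have := h (col hn ρ s)
      rw [comb_col, col_of_two_le hn ρ hs, hb'] at this
      omega
    · have := hb3 (τ s); omega
  · intro h i
    by_cases hi : (i : ℕ) < k + 2
    · have := hlo (comb hn ρ τ i); omega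
    · obtain ⟨s, rfl⟩ := exists_col hn ρ τ (i := i) (by
        by_contra hc; exact hi (comb_low hn ρ τ (by omega)))
      rw [comb_col, hb']
      have hs : 2 ≤ (s : ℕ) := by
        by_contra hc
        exact hi (col_lt_of_lt_two hn ρ (by omega))
      rw [col_of_two_le hn ρ hs]
      have := h s
      omega

/-- An occurrence of the pattern in the diagram either uses only the first `k + 2` columns, where the
diagram imposes no condition, or it reaches beyond them and then lies above the `k` short rows. -/
theorem containsIn_comb {b : Fin n → ℕ} {b' : Fin (r + 3) → ℕ}
    {σ : Perm (Fin 3)} {R : ℕ → ℕ → Prop}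
    (hσ : (σ = p312 ∧ R = (· < ·)) ∨ (σ = p321 ∧ R = (· > ·)))
    (hlo : ∀ t : Fin n, k + 2 ≤ b t) (hflat : ∀ t : Fin n, (t : ℕ) < k → b t = k + 2)
    (hb' : ∀ s, b (hiE hn s) = k + b' s) (hb3 : ∀ s, 3 ≤ b' s)
    {ρ : Perm (Fin (k + 2))} {τ : Perm (Fin (r + 3))} (h : TopDesc ρ ↔ LeftDesc τ) :
    ¬ ContainsIn b (comb hn ρ τ) σ ↔ Av R ρ ∧ ¬ ContainsIn b' τ σ := by
  have hR1 : ∀ i j : Fin (k + 2), R (comb hn ρ τ (loE hn i)) (comb hn ρ τ (loE hn j)) ↔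
      R (ρ i) (ρ j) := by
    intro i j
    rcases hσ with ⟨-, rfl⟩ | ⟨-, rfl⟩
    · exact comb_lt_iff hn h i j
    · exact comb_lt_iff hn h j i
  have hR2 : ∀ s t : Fin (r + 3), R (hiE hn s) (hiE hn t) ↔ R s t := by
    intro s t
    rw [hiE_val, hiE_val]
    rcases hσ with ⟨-, rfl⟩ | ⟨-, rfl⟩ <;> simp
  have hlt2 : ∀ s t : Fin (r + 3), hiE hn s < hiE hn t ↔ s < t := by
    intro s t
    rw [Fin.lt_def, Fin.lt_def, hiE_val, hiE_val]; omega
  have hcol : ∀ s t : Fin (r + 3), (col hn ρ s : ℕ) + 1 ≤ b (hiE hn t) ↔ (s : ℕ) + 1 ≤ b' t := by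
    intro s t
    rw [hb']
    have := hb3 t
    by_cases hs : 2 ≤ (s : ℕ)
    · rw [col_of_two_le hn ρ hs]; omega
    · have := col_lt_of_lt_two hn ρ (s := s) (by omega); omega
  have hmono := col_strictMono hn ρ (r := r)
  rw [containsIn_iff b _ hσ, containsIn_iff b' _ hσ]
  constructor
  · intro hav
    constructor
    · intro x y z hxy hyz h1 h2 h3
      have hz : ∀ w, (loE hn z : ℕ) + 1 ≤ b w := fun w => by
        have := hlo w; rw [loE_val]; omega
      exact hav ⟨loE hn x, loE hn y, loE hn z, hxy, hyz, (comb_lt_iff hn h _ _).2 h1,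
        (comb_lt_iff hn h _ _).2 h2, (hR1 _ _).2 h3, hz _, hz _, hz _⟩
    · rintro ⟨x, y, z, hxy, hyz, h1, h2, h3, h4, h5, h6⟩
      refine hav ⟨col hn ρ x, col hn ρ y, col hn ρ z, hmono hxy, hmono hyz, ?_⟩
      simp only [comb_col, hR2, hlt2, hcol]
      exact ⟨h1, h2, h3, h4, h5, h6⟩
  · rintro ⟨hρ, hτ⟩ ⟨x, y, z, hxy, hyz, h1, h2, h3, h4, h5, h6⟩
    have hxy' : (x : ℕ) < y := hxy
    have hyz' : (y : ℕ) < z := hyz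
    by_cases hz : (z : ℕ) < k + 2
    · obtain ⟨z, rfl⟩ := exists_loE hn hz
      obtain ⟨y, rfl⟩ := exists_loE hn (i := y) (by omega)
      obtain ⟨x, rfl⟩ := exists_loE hn (i := x) (by omega)
      exact hρ x y z hxy hyz ((comb_lt_iff hn h _ _).1 h1) ((comb_lt_iff hn h _ _).1 h2)
        ((hR1 _ _).1 h3)
    · have hk : ∀ w : Fin n, (z : ℕ) + 1 ≤ b w → k ≤ (w : ℕ) := by
        intro w hw
        by_contra hc
        rw [hflat w (by omega)] at hw
        omega
      obtain ⟨x, rfl⟩ := exists_col hn ρ τ (hk _ h4)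
      obtain ⟨y, rfl⟩ := exists_col hn ρ τ (hk _ h5)
      obtain ⟨z, rfl⟩ := exists_col hn ρ τ (hk _ h6)
      simp only [comb_col, hR2, hlt2, hcol] at h1 h2 h3 h4 h5 h6
      exact hτ ⟨x, y, z, hmono.lt_iff_lt.1 hxy, hmono.lt_iff_lt.1 hyz, h1, h2, h3, h4, h5, h6⟩

/-- The two factors `ρ` and `τ` can be chosen independently once the order of their common dots is
fixed. The condition `D`, seen on `ρ` as `D'`, allows restricting to an initial descent. -/
theorem card_comb {b : Fin n → ℕ} {b' : Fin (r + 3) → ℕ}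
    {σ : Perm (Fin 3)} {R : ℕ → ℕ → Prop}
    (hσ : (σ = p312 ∧ R = (· < ·)) ∨ (σ = p321 ∧ R = (· > ·)))
    (hlo : ∀ t : Fin n, k + 2 ≤ b t) (hflat : ∀ t : Fin n, (t : ℕ) < k → b t = k + 2)
    (hb' : ∀ s, b (hiE hn s) = k + b' s) (hb3 : ∀ s, 3 ≤ b' s)
    (D : Perm (Fin n) → Prop) (D' : Perm (Fin (k + 2)) → Prop)
    (hD : ∀ ρ τ, (TopDesc ρ ↔ LeftDesc τ) → (D (comb hn ρ τ) ↔ D' ρ)) :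
    Nat.card {π // IsTransversal b π ∧ ¬ ContainsIn b π σ ∧ D π} =
      Nat.card {ρ // (Av R ρ ∧ D' ρ) ∧ TopDesc ρ} * SYcardLeftDesc b' σ +
      Nat.card {ρ // (Av R ρ ∧ D' ρ) ∧ ¬ TopDesc ρ} * SYcardLeftAsc b' σ := by
  have h1 : Nat.card {x : Perm (Fin (k + 2)) × Perm (Fin (r + 3)) //
      (TopDesc x.1 ↔ LeftDesc x.2) ∧ (Av R x.1 ∧ D' x.1) ∧
        IsTransversal b' x.2 ∧ ¬ ContainsIn b' x.2 σ} =
      Nat.card {π // IsTransversal b π ∧ ¬ ContainsIn b π σ ∧ D π} := by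
    refine card_bij (fun x => comb hn x.1 x.2) ?_ ?_ ?_
    · rintro ⟨ρ, τ⟩ ⟨h, ⟨h1, h2⟩, h3, h4⟩
      exact ⟨(isTransversal_comb hn hlo hb' hb3 ρ τ).2 h3,
        (containsIn_comb hn hσ hlo hflat hb' hb3 h).2 ⟨h1, h4⟩, (hD ρ τ h).2 h2⟩
    · rintro ⟨ρ, τ⟩ ⟨ρ', τ'⟩ ⟨h, -⟩ ⟨h', -⟩ heq
      obtain ⟨rfl, rfl⟩ := comb_inj hn h h' heq
      rfl
    · rintro π ⟨h1, h2, h3⟩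
      obtain ⟨ρ, τ, h, rfl⟩ := exists_comb hn π (fun i hi => by
        have := h1 i
        rw [hflat _ hi] at this
        omega)
      rw [isTransversal_comb hn hlo hb' hb3] at h1
      rw [containsIn_comb hn hσ hlo hflat hb' hb3 h] at h2
      exact ⟨(ρ, τ), ⟨h, ⟨h2.1, (hD ρ τ h).1 h3⟩, h1, h2.2⟩, rfl⟩
  rw [← h1, card_split _ (fun x => TopDesc x.1)]
  congr 1
  · rw [SYcardLeftDesc, ← card_prod]
    refine Nat.card_congr (Equiv.subtypeEquivRight fun x => ?_)
    change _ ↔ _ ∧ _ ∧ _ ∧ LeftDesc x.2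
    tauto
  · rw [SYcardLeftAsc, ← card_prod]
    refine Nat.card_congr (Equiv.subtypeEquivRight fun x => ?_)
    have h2 : ¬ LeftDesc x.2 ↔
        ∀ i j : Fin (r + 3), (i : ℕ) = 0 → (j : ℕ) = 1 → x.2 i < x.2 j := by
      rw [not_leftDesc_iff]
      constructor
      · intro h i k hi hk
        have hi' : i = 0 := Fin.ext hi
        have hk' : k = 1 := Fin.ext hk
        rwa [hi', hk']
      · intro h; exact h 0 1 rfl rfl
    rw [← h2]
    tauto

end Gluing

/-- The result for diagrams of size `n = k + m`, with the upper diagram `b'` of size `m`. -/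
theorem core {n k m : ℕ} (hn : n = k + m) (hm : 3 ≤ m) (hk : 1 ≤ k) {b : Fin n → ℕ}
    {b' : Fin m → ℕ} {σ : Perm (Fin 3)} {R : ℕ → ℕ → Prop}
    (hσ : (σ = p312 ∧ R = (· < ·)) ∨ (σ = p321 ∧ R = (· > ·)))
    (hlo : ∀ t : Fin n, k + 2 ≤ b t) (hflat : ∀ t : Fin n, (t : ℕ) < k → b t = k + 2)
    (hb' : ∀ s : Fin m, b ⟨k + s, by omega⟩ = k + b' s) (hb3 : ∀ s, 3 ≤ b' s) :
    SYcard b σ = catalan (k + 1) * SYcardLeftDesc b' σ +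
      (catalan (k + 2) - catalan (k + 1)) * SYcardLeftAsc b' σ ∧
    SYcardLeftDesc b σ = catalan k * SYcardLeftDesc b' σ +
      (catalan (k + 1) - catalan k) * SYcardLeftAsc b' σ := by
  obtain ⟨r, rfl⟩ : ∃ r, m = r + 3 := ⟨m - 3, by omega⟩
  have hR : R = (· < ·) ∨ R = (· > ·) := hσ.imp And.right And.right
  constructor
  · have h := card_comb hn hσ hlo hflat hb' hb3 (fun _ => True) (fun _ => True)
      (fun _ _ _ => Iff.rfl)
    have h2 := card_split (fun ρ : Perm (Fin (k + 2)) => Av R ρ) TopDesc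
    simp only [and_true] at h
    rw [card_av hR, card_av_topDesc hR] at h2
    rw [card_av_topDesc hR] at h
    rw [SYcard, h, h2, Nat.add_sub_cancel_left]
  · obtain ⟨q, rfl⟩ : ∃ q, k = q + 1 := ⟨k - 1, by omega⟩
    have hD : ∀ (ρ : Perm (Fin (q + 1 + 2))) (τ : Perm (Fin (r + 3))),
        (TopDesc ρ ↔ LeftDesc τ) → (LeftDesc (comb hn ρ τ) ↔ LeftDesc ρ) := by
      intro ρ τ h
      rw [leftDesc_iff, ← comb_lt_iff hn h]
      constructor
      · intro h; exact h _ _ rfl rfl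
      · intro h i j hi hj
        have hi' : i = loE hn 0 := Fin.ext hi
        have hj' : j = loE hn 1 := Fin.ext hj
        rwa [hi', hj']
    have h := card_comb hn hσ hlo hflat hb' hb3 LeftDesc LeftDesc hD
    have h2 := card_split (fun ρ : Perm (Fin (q + 3)) => Av R ρ ∧ LeftDesc ρ) TopDesc
    have h3 := card_av_leftDesc_topDesc hR q
    simp only [← and_assoc] at h3
    rw [card_av_leftDesc hR, h3] at h2
    rw [h3] at h
    change Nat.card {π // IsTransversal b π ∧ ¬ ContainsIn b π σ ∧ LeftDesc π} = _
    rw [h, h2, Nat.add_sub_cancel_left]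

theorem stmt8 (n : ℕ) (b : Fin n → ℕ) (hmono : Monotone b)
    (hb : ∀ y : Fin n, (y : ℕ) + 1 ≤ b y ∧ b y ≤ n)
    (σ : Equiv.Perm (Fin 3)) (hσ : σ = p312 ∨ σ = p321)
    (k : ℕ) (hk : 1 ≤ k) (hkn : k < n)
    (hflat : ∀ t : Fin n, (t : ℕ) < k → b t = k + 2)
    (hcrit : k + 2 < b ⟨k, hkn⟩) :
    SYcard b σ =
      catalan (k + 1) *
        SYcardLeftDesc (fun s : Fin (n - k) =>
          b ⟨k + (s : ℕ), by have := s.isLt; omega⟩ - k) σ +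
      (catalan (k + 2) - catalan (k + 1)) *
        SYcardLeftAsc (fun s : Fin (n - k) =>
          b ⟨k + (s : ℕ), by have := s.isLt; omega⟩ - k) σ ∧
    SYcardLeftDesc b σ =
      catalan k *
        SYcardLeftDesc (fun s : Fin (n - k) =>
          b ⟨k + (s : ℕ), by have := s.isLt; omega⟩ - k) σ +
      (catalan (k + 1) - catalan k) *
        SYcardLeftAsc (fun s : Fin (n - k) =>
          b ⟨k + (s : ℕ), by have := s.isLt; omega⟩ - k) σ := by
  have hb0 : ∀ t : Fin n, k ≤ (t : ℕ) → k + 3 ≤ b t := fun t ht =>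
    hcrit.trans_le (hmono (Fin.le_def.2 ht))
  have hm3 := (hb ⟨k, hkn⟩).2
  have hσ' : ∃ R : ℕ → ℕ → Prop,
      (σ = p312 ∧ R = (· < ·)) ∨ (σ = p321 ∧ R = (· > ·)) := by
    rcases hσ with h | h
    · exact ⟨_, Or.inl ⟨h, rfl⟩⟩
    · exact ⟨_, Or.inr ⟨h, rfl⟩⟩
  obtain ⟨R, hR⟩ := hσ'
  refine core (by omega) (by omega) hk hR ?_ hflat ?_ ?_
  · intro t
    rcases lt_or_ge (t : ℕ) k with ht | ht
    · rw [hflat t ht]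
    · have := hb0 t ht; omega
  · intro s
    have := hb0 ⟨k + s, by omega⟩ (by simp)
    omega
  · intro s
    have := hb0 ⟨k + s, by omega⟩ (by simp)
    omega
end
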